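/- arXiv:1909.09832 — 3 statements merged into one kernel-verified Lean document; each statement's English description precedes it below -/
import Mathlib

section
/- Let p be a prime number, assume A (hence K) has characteristic p, and let L/K be a cyclic Galois extension of degree p with B the integral closure of A in L. Let H be the ideal of A associated to L/K and assume H ≠ A. Let C := {v_A(x) : x ∈ H, x ≠ 0} ⊆ Γ_A. Then either C has a least element, or for every c ∈ C there exists d ∈ Γ_A such that p·d ∈ C and p·d ≤ c. -/
set_option synthInstance.maxHeartbeats 400000

open ValuationRing

/-!
The integral closure of a Henselian valuation ring in an algebraic extension of its fraction field
is again a valuation ring, so `v_A` has an extension to an algebraic closure of `L` that is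
invariant under all `K`-automorphisms. By Artin–Schreier there is `α ∈ L` with `σ α = α + 1`, and
`σ (α - k) / (α - k) - 1 = (α - k)⁻¹` lies in `J_σ` for all `k ∈ K`. Up to valuation these elements
generate `J_σ`: write `x ∈ Lˣ` as `f(α)` with `deg f < p`, so that `σ x / x = f(α + 1) / f(α)` is
the product of `1 + (α - c)⁻¹` over the roots `c` of `f`. As `c` has degree prime to `p` over `K`,
the average `k` of its conjugates exists, and it satisfies `|α - k| ≤ |α - c|` because
`|τ α - α| ≤ 1 < |α - k|` for every automorphism `τ`, where `1 < |α - k|` is the assumption `H ≠ A`.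

Hence the values of the norms of the `(α - k)⁻¹` are cofinal in `C`. If `α` has no best
approximation in `K`, then for every `k` some `l` is closer to `α`, which gives `|α - k| = |l - k|`
and `|N (α - k)⁻¹| = |(l - k)⁻¹| ^ p` with `l - k ∈ K`.
-/

section HenselianLocal

open IsLocalRing Polynomial
open scoped Pointwise

lemma mem_range_algebraMap_of_simple_root {A B : Type*} [CommRing A] [HenselianLocalRing A]
    [CommRing B] [IsDomain B] [Algebra A B] (P : Ideal B) [P.LiesOver (maximalIdeal A)]
    {f : A[X]} (hf : f.Monic) {b : B} (hb : aeval b f = 0) (hb' : aeval b (derivative f) ∉ P)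
    {a : A} (ha : b - algebraMap A B a ∈ P) : b ∈ Set.range (algebraMap A B) := by
  have mem_max (c : A) : c ∈ maximalIdeal A ↔ algebraMap A B c ∈ P := Ideal.mem_of_liesOver P _ c
  have congr_mod (g : A[X]) : aeval b g - algebraMap A B (g.eval a) ∈ P := by
    rw [← aeval_algebraMap_apply_eq_algebraMap_eval, ← eval_map_algebraMap, ← eval_map_algebraMap]
    exact P.mem_of_dvd (sub_dvd_eval_sub _ _ _) ha
  obtain ⟨c, hc, hca⟩ := HenselianLocalRing.is_henselian f hf a
    ((mem_max _).2 <| by simpa [hb] using congr_mod f)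
    (by
      by_contra hu
      exact hb' <| (P.sub_mem_iff_left ((mem_max _).1 hu)).1 (congr_mod _))
  have hcb : algebraMap A B c - b ∈ P := by
    simpa using P.sub_mem ((mem_max _).1 hca) ha
  obtain ⟨k, hk⟩ := binomExpansion (f.map (algebraMap A B)) b (algebraMap A B c - b)
  have hprod : (algebraMap A B c - b) *
      (aeval b (derivative f) + k * (algebraMap A B c - b)) = 0 := by
    rw [add_sub_cancel, derivative_map] at hk
    simp only [eval_map_algebraMap, aeval_algebraMap_apply_eq_algebraMap_eval, hb, hc.eq_zero,
      map_zero] at hk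
    linear_combination -hk
  rcases mul_eq_zero.1 hprod with h | h
  · exact ⟨c, sub_eq_zero.1 h⟩
  · refine absurd ((P.add_mem_iff_left (P.mul_mem_left k hcb)).1 ?_) hb'
    simp [h]

lemma exists_stabilizer_invariant_sub_one_mem {B G : Type*} [CommRing B] [Group G] [Finite G]
    [MulSemiringAction G B] (P : Ideal B) [hP : P.IsMaximal] :
    ∃ β : B, (∀ g : G, g • P = P → g • β = β) ∧ β - 1 ∈ P ∧
      ∀ g : G, g • P ≠ P → g • β ∈ P := by
  cases nonempty_fintype G
  classical
  have hinf : ¬ ({g : G | g • P ≠ P} : Finset G).inf (fun g => g • P) ≤ P := by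
    rw [Ideal.IsPrime.inf_le' inferInstance]
    rintro ⟨g, hg, hgP⟩
    exact (Finset.mem_filter.1 hg).2 (smul_eq_of_smul_le hgP)
  obtain ⟨x, hx, hxP⟩ := SetLike.not_le_iff_exists.1 hinf
  obtain ⟨y, i, hi, hyx⟩ := hP.exists_inv hxP
  have hγ (g : G) (hg : g • P ≠ P) : y * x ∈ g • P :=
    Ideal.mul_mem_left _ y <|
      Finset.inf_le (f := fun g => g • P) (Finset.mem_filter.2 ⟨Finset.mem_univ g, hg⟩) hx
  refine ⟨∏ δ : MulAction.stabilizer G P, (δ : G) • (y * x), fun g hg => ?_, ?_, fun g hg => ?_⟩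
  · simp only [Finset.smul_prod', smul_smul g]
    exact Equiv.prod_comp (Equiv.mulLeft (⟨g, hg⟩ : MulAction.stabilizer G P))
      (fun δ => (δ : G) • (y * x))
  · rw [← Ideal.Quotient.eq, map_prod, map_one]
    refine Finset.prod_eq_one fun δ _ => ?_
    rw [← map_one (Ideal.Quotient.mk P), Ideal.Quotient.eq]
    have : (δ : G) • (y * x) - 1 = -((δ : G) • i) := by
      rw [eq_sub_of_add_eq hyx, smul_sub, smul_one]
      ring
    rw [this]
    refine P.neg_mem ?_
    simpa only [MulAction.mem_stabilizer_iff.1 δ.2] using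
      Ideal.smul_mem_pointwise_smul (δ : G) i P hi
  · rw [← Ideal.mem_inv_pointwise_smul_iff]
    refine Ideal.mem_of_dvd _ (Finset.dvd_prod_of_mem _ (Finset.mem_univ 1)) ?_
    simpa using hγ g⁻¹ fun h => hg (inv_smul_eq_iff.1 h).symm

lemma eval_derivative_prodXSubSMul_notMem {B G : Type*} [CommRing B] [Group G] [Fintype G]
    [MulSemiringAction G B] {P : Ideal B} [P.IsPrime] {β : B}
    (h : ∀ g : G, g • β ≠ β → β - g • β ∉ P) :
    (derivative (prodXSubSMul G B β)).eval β ∉ P := by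
  classical
  let R : B[X] := ∏ g ∈ (Finset.univ : Finset (G ⧸ MulAction.stabilizer G β)).erase
      (QuotientGroup.mk 1), (X - C (MulAction.ofQuotientStabilizer G β g))
  have hR : prodXSubSMul G B β = (X - C β) * R := by
    rw [prodXSubSMul, ← Finset.mul_prod_erase _ _ (Finset.mem_univ (QuotientGroup.mk 1)),
      MulAction.ofQuotientStabilizer_mk, one_smul]
  have hder : (derivative (prodXSubSMul G B β)).eval β = R.eval β := by
    rw [hR, derivative_mul]; simp
  rw [hder, eval_prod, Ideal.IsPrime.prod_mem_iff]
  rintro ⟨g, hg, hgP⟩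
  induction g using QuotientGroup.induction_on with
  | H g =>
    refine h g (fun hgβ => (Finset.mem_erase.1 hg).1 ?_) (by simpa using hgP)
    simpa [QuotientGroup.eq, MulAction.mem_stabilizer_iff, inv_smul_eq_iff] using hgβ

lemma isLocalRing_of_henselianLocalRing_of_isInvariant (A B G : Type*) [CommRing A]
    [HenselianLocalRing A] [CommRing B] [IsDomain B] [Algebra A B] [Group G] [Finite G]
    [MulSemiringAction G B] [SMulCommClass G A B] [Algebra.IsInvariant A B G] :
    IsLocalRing B := by
  cases nonempty_fintype G
  have := Algebra.IsInvariant.isIntegral A B G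
  have under_eq (P : Ideal B) [P.IsMaximal] : P.under A = maximalIdeal A :=
    eq_maximalIdeal (Ideal.isMaximal_comap_of_isIntegral_of_isMaximal P)
  obtain ⟨P, hP⟩ := Ideal.exists_maximal B
  refine IsLocalRing.of_unique_max_ideal ⟨P, hP, fun Q hQ => ?_⟩
  by_contra hne
  obtain ⟨g₀, rfl⟩ := Algebra.IsInvariant.exists_smul_of_under_eq A B G P Q
    ((under_eq P).trans (under_eq Q).symm)
  obtain ⟨β, hβ_fixed, hβ_one, hβ_mem⟩ := exists_stabilizer_invariant_sub_one_mem (G := G) P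
  -- Modulo `P`, `β` is a simple root of its orbit polynomial, so Hensel puts `β` in `A`; but then
  -- `β` is `G`-invariant, while `g • β ∈ P` and `β - 1 ∈ P` for `g • P ≠ P`.
  have hβ_sub (g : G) (hg : g • P ≠ P) : β - g • β ∉ P := fun hmem => by
    have h := P.sub_mem (P.add_mem hmem (hβ_mem g hg)) hβ_one
    exact hP.ne_top ((Ideal.eq_top_iff_one P).2 (by simpa using h))
  obtain ⟨f, hf_map, -, hf⟩ := lifts_and_natDegree_eq_and_monic
    (f := algebraMap A B) (p := prodXSubSMul G B β)
    ((lifts_iff_coeff_lifts _).2 fun n =>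
      Algebra.IsInvariant.isInvariant (G := G) _ fun g => prodXSubSMul.coeff G B β g n)
    (prodXSubSMul.monic G B β)
  have : P.LiesOver (maximalIdeal A) := ⟨(under_eq P).symm⟩
  obtain ⟨a, rfl⟩ := mem_range_algebraMap_of_simple_root (A := A) P hf (b := β) (a := 1)
    (by rw [← eval_map_algebraMap, hf_map, prodXSubSMul.eval])
    (by
      rw [← eval_map_algebraMap, ← derivative_map, hf_map]
      exact eval_derivative_prodXSubSMul_notMem (G := G) fun g hg =>
        hβ_sub g fun hgP => hg (hβ_fixed g hgP))
    (by simpa using hβ_one)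
  exact hβ_sub g₀ hne (by simp [smul_algebraMap])

end HenselianLocal

section IntegralClosure

open IsLocalRing Polynomial

lemma mem_range_or_inv_mem_range_of_aeval_eq_zero {B M : Type*} [CommRing B] [IsLocalRing B]
    [Field M] [Algebra B M] [IsIntegrallyClosedIn B M] {y : M} {q : B[X]} (hy : aeval y q = 0)
    (hq : q.map (residue B) ≠ 0) :
    y ∈ Set.range (algebraMap B M) ∨ y⁻¹ ∈ Set.range (algebraMap B M) := by
  induction hn : q.natDegree using Nat.strong_induction_on generalizing q with
  | _ n ih =>
  obtain ⟨b, hb⟩ := IsIntegrallyClosedIn.algebraMap_eq_of_integral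
    (isIntegral_leadingCoeff_smul q y hy)
  rw [Algebra.smul_def] at hb
  by_cases ha : IsUnit q.leadingCoeff
  · obtain ⟨u, hu⟩ := ha
    exact .inl ⟨↑u⁻¹ * b, by rw [map_mul, hb, ← hu, ← mul_assoc, ← map_mul]; simp⟩
  by_cases hbu : IsUnit b
  · obtain ⟨u, rfl⟩ := hbu
    refine .inr ⟨↑u⁻¹ * q.leadingCoeff, eq_inv_of_mul_eq_one_left ?_⟩
    rw [map_mul, mul_assoc, ← hb, ← map_mul]
    simp
  -- As `q.leadingCoeff * y ^ n = b * y ^ (n - 1)` the top term can be lowered.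
  have hlead : residue B q.leadingCoeff = 0 := (residue_eq_zero_iff _).2 ha
  have hb_res : residue B b = 0 := (residue_eq_zero_iff _).2 hbu
  have hdeg : n ≠ 0 := fun h0 => by
    rw [eq_C_of_natDegree_eq_zero (hn.trans h0), map_C] at hq
    rw [leadingCoeff, hn, h0] at hlead
    simp [hlead] at hq
  have hq_eq := eraseLead_add_C_mul_X_pow q
  refine ih (q.eraseLead + C b * X ^ (n - 1)).natDegree ?_ ?_ ?_ rfl
  · refine lt_of_le_of_lt (natDegree_add_le_of_degree_le (n := n - 1) ?_
      (natDegree_C_mul_X_pow_le _ _)) (by lia)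
    exact hn ▸ eraseLead_natDegree_le q
  · rw [← hq_eq, hn] at hy
    simp only [map_add, map_mul, aeval_C, map_pow, aeval_X, hb] at hy ⊢
    rwa [mul_assoc, mul_pow_sub_one hdeg]
  · rw [← hq_eq, Polynomial.map_add, Polynomial.map_mul, map_C, hlead] at hq
    simpa [hb_res] using hq

lemma isIntegral_or_isIntegral_inv_of_isLocalRing {A M : Type*} [CommRing A] [IsDomain A]
    [ValuationRing A] [Field M] [Algebra A M] [FaithfulSMul A M] [IsLocalRing (integralClosure A M)]
    {y : M} (hy : IsAlgebraic A y) : IsIntegral A y ∨ IsIntegral A y⁻¹ := by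
  obtain ⟨r, hr0, hr⟩ := hy
  obtain ⟨_⟩ : Nonempty (NormalizedGCDMonoid A) := inferInstance
  have hcontent := (isPrimitive_iff_contentIdeal_eq_top _).1 r.isPrimitive_primPart
  have hq : (r.primPart.map (algebraMap A (integralClosure A M))).map
      (residue (integralClosure A M)) ≠ 0 := by
    rw [ne_eq, ← contentIdeal_eq_bot_iff, contentIdeal_map_eq_map_contentIdeal,
      contentIdeal_map_eq_map_contentIdeal, hcontent, Ideal.map_top, Ideal.map_top]
    exact top_ne_bot
  refine (mem_range_or_inv_mem_range_of_aeval_eq_zero (y := y) ?_ hq).imp ?_ ?_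
  · rw [aeval_map_algebraMap]
    exact aeval_primPart_eq_zero hr0 hr
  all_goals
    rintro ⟨b, hb⟩
    exact hb ▸ b.2

section Henselian

variable {A : Type*} (K : Type*) {F : Type*} [CommRing A] [IsDomain A] [ValuationRing A]
  [HenselianLocalRing A] [Field K] [Algebra A K] [IsFractionRing A K] [Field F] [Algebra K F]
  [Algebra A F] [IsScalarTower A K F]

include K

lemma isIntegral_or_isIntegral_inv_of_isGalois [IsGalois K F] [FiniteDimensional K F] (y : F) :
    IsIntegral A y ∨ IsIntegral A y⁻¹ := by
  let B := integralClosure A F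
  have : IsFractionRing B F := integralClosure.isFractionRing_of_finite_extension K F
  have : Algebra.IsInvariant A B (B ≃ₐ[A] B) := Algebra.isInvariant_of_isGalois' A K F B
  have : Finite (B ≃ₐ[A] B) := .of_equiv _ (galRestrict A K F B).toEquiv
  have : IsLocalRing B := isLocalRing_of_henselianLocalRing_of_isInvariant A B (B ≃ₐ[A] B)
  have : FaithfulSMul A F := .trans A K F
  exact isIntegral_or_isIntegral_inv_of_isLocalRing <|
    (IsFractionRing.isAlgebraic_iff A K F).2 (Algebra.IsAlgebraic.isAlgebraic y)

lemma isIntegral_or_isIntegral_inv_of_normal [Normal K F] (y : F) :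
    IsIntegral A y ∨ IsIntegral A y⁻¹ := by
  obtain ⟨n, z, hz⟩ := IsPurelyInseparable.pow_mem (separableClosure K F) (ringExpChar K) y
  have hpos : 0 < ringExpChar K ^ n := pow_pos (expChar_pos K _) _
  let M := (FiniteGaloisIntermediateField.adjoin K {z}).toIntermediateField
  have hzM : z ∈ M := FiniteGaloisIntermediateField.subset_adjoin _ _ rfl
  let φ : M →ₐ[A] F := ((separableClosure K F).val.comp M.val).restrictScalars A
  have hφ : φ ⟨z, hzM⟩ = y ^ ringExpChar K ^ n := hz
  refine (isIntegral_or_isIntegral_inv_of_isGalois K (A := A) (⟨z, hzM⟩ : M)).imp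
    (fun h => .of_pow hpos ?_) (fun h => .of_pow hpos ?_)
  · exact hφ ▸ h.map φ
  · rw [inv_pow, ← hφ, ← map_inv₀]
    exact h.map φ

lemma isIntegral_or_isIntegral_inv_of_isAlgebraic [Algebra.IsAlgebraic K F] (y : F) :
    IsIntegral A y ∨ IsIntegral A y⁻¹ := by
  have : Algebra.IsAlgebraic K (AlgebraicClosure F) := .trans K F _
  have : IsAlgClosure K (AlgebraicClosure F) := ⟨inferInstance, inferInstance⟩
  have : Normal K (AlgebraicClosure F) := IsAlgClosure.normal K _
  have hinj := FaithfulSMul.algebraMap_injective F (AlgebraicClosure F)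
  have h := isIntegral_or_isIntegral_inv_of_normal (A := A) K
    (algebraMap F (AlgebraicClosure F) y)
  rwa [← map_inv₀, isIntegral_algebraMap_iff hinj, isIntegral_algebraMap_iff hinj] at h

variable (A F) in
/-- The integral closure of a Henselian valuation ring `A` in an algebraic extension `F` of its
fraction field `K`, as a valuation subring of `F`. Its valuation is the extension of the valuation
of `A` to `F`. -/
def integralClosureValuationSubring [Algebra.IsAlgebraic K F] : ValuationSubring F where
  toSubring := (integralClosure A F).toSubring
  mem_or_inv_mem' := isIntegral_or_isIntegral_inv_of_isAlgebraic K

lemma valuation_integralClosureValuationSubring_le_one_iff [Algebra.IsAlgebraic K F] {y : F} :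
    (integralClosureValuationSubring A K F).valuation y ≤ 1 ↔ IsIntegral A y :=
  (integralClosureValuationSubring A K F).valuation_le_one_iff y

end Henselian

end IntegralClosure

section IntegralValuation

variable {A K F Γ₀ : Type*} [CommRing A] [Field K] [Algebra A K] [Field F] [Algebra K F]
  [Algebra A F] [IsScalarTower A K F] [LinearOrderedCommGroupWithZero Γ₀] {v : Valuation F Γ₀}

lemma valuation_le_iff_isIntegral_div (hv : ∀ y, v y ≤ 1 ↔ IsIntegral A y) {x y : F} (hy : y ≠ 0) :
    v x ≤ v y ↔ IsIntegral A (x / y) := by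
  rw [← hv, map_div₀, div_le_one₀ (v.pos_iff.2 hy)]

lemma valuation_algEquiv_le_iff (hv : ∀ y, v y ≤ 1 ↔ IsIntegral A y) (τ : F ≃ₐ[K] F) (x y : F) :
    v (τ x) ≤ v (τ y) ↔ v x ≤ v y := by
  rcases eq_or_ne y 0 with rfl | hy
  · simp
  · rw [valuation_le_iff_isIntegral_div hv hy, valuation_le_iff_isIntegral_div hv (by simpa),
      ← map_div₀]
    exact isIntegral_algEquiv (τ.restrictScalars A)

lemma finite_range_pow_algEquiv [Algebra.IsAlgebraic K F] (τ : F ≃ₐ[K] F) (y : F) :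
    (Set.range fun n : ℕ => (τ ^ n) y).Finite := by
  refine ((minpoly K y).rootSet_finite F).subset ?_
  rintro _ ⟨n, rfl⟩
  rw [Polynomial.mem_rootSet]
  refine ⟨minpoly.ne_zero (Algebra.IsIntegral.isIntegral y), ?_⟩
  rw [Polynomial.aeval_algHom_apply, minpoly.aeval, map_zero]

lemma valuation_algEquiv [Algebra.IsAlgebraic K F] (hv : ∀ y, v y ≤ 1 ↔ IsIntegral A y)
    (τ : F ≃ₐ[K] F) (y : F) : v (τ y) = v y := by
  have hle (τ : F ≃ₐ[K] F) (y : F) : v (τ y) ≤ v y := by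
    by_contra! hlt
    have hmono : StrictMono fun n : ℕ => v ((τ ^ n) y) := strictMono_nat_of_lt_succ fun n => by
      rw [pow_succ, AlgEquiv.mul_apply, ← not_le, valuation_algEquiv_le_iff hv]
      exact hlt.not_ge
    have hinj : Function.Injective fun n : ℕ => (τ ^ n) y := hmono.injective.of_comp (f := v)
    exact Set.infinite_range_of_injective hinj (finite_range_pow_algEquiv τ y)
  refine (hle τ y).antisymm ?_
  simpa using hle τ.symm (τ y)

lemma hasExtension_of_le_one_iff_isIntegral [IsDomain A] [ValuationRing A] [IsFractionRing A K]
    (hv : ∀ y, v y ≤ 1 ↔ IsIntegral A y) : (valuation A K).HasExtension v where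
  val_isEquiv_comap := by
    rw [Valuation.isEquiv_iff_val_le_one]
    intro x
    rw [Valuation.comap_apply, hv,
      isIntegral_algebraMap_iff (FaithfulSMul.algebraMap_injective K F),
      IsIntegrallyClosed.isIntegral_iff]
    exact mem_integer_iff A K x

end IntegralValuation

section Valuation

lemma exists_mem_valuation_le_of_mem_span {R Γ₀ : Type*} [CommRing R]
    [LinearOrderedCommMonoidWithZero Γ₀] {v : Valuation R Γ₀} (hv : ∀ r, v r ≤ 1) {s : Set R}
    (hs : s.Nonempty) {x : R} (hx : x ∈ Ideal.span s) : ∃ y ∈ s, v x ≤ v y := by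
  induction hx using Submodule.span_induction with
  | mem x hx => exact ⟨x, hx, le_rfl⟩
  | zero => exact hs.imp fun y hy => ⟨hy, by simp⟩
  | add x y _ _ hx hy =>
    obtain ⟨a, ha, hxa⟩ := hx
    obtain ⟨b, hb, hyb⟩ := hy
    rcases le_max_iff.1 (v.map_add x y) with h | h
    · exact ⟨a, ha, h.trans hxa⟩
    · exact ⟨b, hb, h.trans hyb⟩
  | smul r x _ hx =>
    obtain ⟨a, ha, hxa⟩ := hx
    refine ⟨a, ha, ?_⟩
    rw [smul_eq_mul, map_mul]
    exact mul_le_of_le_one_of_le (hv r) hxa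

lemma valuation_multiset_prod_sub_one_le {R Γ₀ : Type*} [CommRing R]
    [LinearOrderedCommMonoidWithZero Γ₀] {v : Valuation R Γ₀} {r : Γ₀} (hr : r ≤ 1) {s : Multiset R}
    (hs : ∀ x ∈ s, v (x - 1) ≤ r) : v (s.prod - 1) ≤ r := by
  refine Multiset.prod_induction (fun x => v (x - 1) ≤ r) s (fun x y hx hy => ?_) (by simp) hs
  have hy1 : v y ≤ 1 := by simpa using v.map_add_le (hy.trans hr) v.map_one.le
  have hxy : x * y - 1 = (x - 1) * y + (y - 1) := by ring
  rw [hxy]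
  exact v.map_add_le (by simpa using mul_le_mul' hx hy1) hy

lemma valuation_multiset_sum_le {R Γ₀ : Type*} [Ring R]
    [LinearOrderedCommMonoidWithZero Γ₀] {v : Valuation R Γ₀} {r : Γ₀} {s : Multiset R}
    (hs : ∀ x ∈ s, v x ≤ r) : v s.sum ≤ r :=
  Multiset.sum_induction (fun x => v x ≤ r) s (fun _ _ => v.map_add_le) (by simp) hs

variable {K F Γ₀ : Type*} [Field K] [Field F] [Algebra K F] [LinearOrderedCommGroupWithZero Γ₀]
  {v : Valuation F Γ₀}

lemma valuation_algebraMap_norm [FiniteDimensional K F] [IsGalois K F]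
    (hv : ∀ (τ : F ≃ₐ[K] F) y, v (τ y) = v y) (y : F) :
    v (algebraMap K F (Algebra.norm K y)) = v y ^ Nat.card (F ≃ₐ[K] F) := by
  simp [Algebra.norm_eq_prod_automorphisms, hv, Nat.card_eq_fintype_card]

lemma valuation_natCast_eq_one_of_lt {p : ℕ} [Fact p.Prime] [CharP F p] (v : Valuation F Γ₀) {n : ℕ}
    (hn : 0 < n) (hnp : n < p) : v (n : F) = 1 := by
  let := ZMod.algebra F p
  have hne : (n : ZMod p) ≠ 0 := by
    rw [ne_eq, ZMod.natCast_eq_zero_iff]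
    exact Nat.not_dvd_of_pos_of_lt hn hnp
  simpa using FiniteField.valuation_algebraMap_eq_one v (n : ZMod p) hne

open Polynomial

lemma exists_valuation_sub_algebraMap_le [Normal K F] (hv : ∀ (τ : F ≃ₐ[K] F) y, v (τ y) = v y)
    {r : Γ₀} {a : F} (ha : ∀ τ : F ≃ₐ[K] F, v (τ a - a) ≤ r) {c : F}
    (hc : v ((minpoly K c).natDegree : F) = 1) :
    ∃ k : K, v (a - algebraMap K F k) ≤ max (v (a - c)) r := by
  have hint : IsIntegral K c := Normal.isIntegral inferInstance c
  let P := minpoly K c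
  have hsplits : (P.map (algebraMap K F)).Splits := Normal.splits inferInstance c
  have hdeg : (P.natDegree : F) ≠ 0 := v.ne_zero_iff.1 (hc.trans_ne one_ne_zero)
  -- `k` is the average of the conjugates of `c`.
  refine ⟨-P.nextCoeff / P.natDegree, ?_⟩
  have hsum : (P.natDegree : F) * (a - algebraMap K F (-P.nextCoeff / P.natDegree)) =
      ((P.aroots F).map (a - ·)).sum := by
    have hroots := hsplits.nextCoeff_eq_neg_sum_roots_of_monic ((minpoly.monic hint).map _)
    rw [nextCoeff_map (FaithfulSMul.algebraMap_injective K F)] at hroots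
    rw [Multiset.sum_map_sub, Multiset.map_id', Multiset.map_const', Multiset.sum_replicate,
      ← hsplits.natDegree_eq_card_roots, natDegree_map, nsmul_eq_mul, aroots_def,
      ← neg_eq_iff_eq_neg.2 hroots, mul_sub, map_div₀, map_natCast, mul_div_cancel₀ _ hdeg, map_neg]
  have hroot (c' : F) (hc' : c' ∈ P.aroots F) : v (a - c') ≤ max (v (a - c)) r := by
    obtain ⟨τ, rfl⟩ := minpoly.exists_algEquiv_of_root' hint.isAlgebraic (mem_aroots.1 hc').2
    have : a - τ c = τ (a - c) - (τ a - a) := by rw [map_sub]; ring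
    rw [this]
    exact (v.map_sub _ _).trans (max_le_max (hv τ _).le (ha τ))
  have hle : v ((P.aroots F).map (a - ·)).sum ≤ max (v (a - c)) r := valuation_multiset_sum_le <| by
    rintro _ hx
    obtain ⟨c', hc', rfl⟩ := Multiset.mem_map.1 hx
    exact hroot c' hc'
  rwa [← hsum, map_mul, hc, one_mul] at hle

lemma valuation_aeval_add_one_div_sub_one_le {f : K[X]} (hf : f ≠ 0)
    (hsplits : (f.map (algebraMap K F)).Splits) {r : Γ₀} (hr : r ≤ 1) {a : F}
    (ha : ∀ c, aeval c f = 0 → a ≠ c ∧ v (a - c)⁻¹ ≤ r) :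
    v (aeval (a + 1) f / aeval a f - 1) ≤ r := by
  have hprod : aeval (a + 1) f / aeval a f =
      ((f.aroots F).map fun c => (a + 1 - c) / (a - c)).prod := by
    rw [hsplits.aeval_eq_prod_aroots, hsplits.aeval_eq_prod_aroots, mul_div_mul_left,
      ← Multiset.prod_map_div]
    simpa
  rw [hprod]
  refine valuation_multiset_prod_sub_one_le hr fun x hx => ?_
  obtain ⟨c, hc, rfl⟩ := Multiset.mem_map.1 hx
  obtain ⟨hne, hle⟩ := ha c (mem_aroots.1 hc).2
  have : (a + 1 - c) / (a - c) - 1 = (a - c)⁻¹ := by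
    field_simp [sub_ne_zero.2 hne]
    ring
  exact this ▸ hle

lemma exists_valuation_aeval_add_one_div_sub_one_le [Normal K F]
    (hv : ∀ (τ : F ≃ₐ[K] F) y, v (τ y) = v y) {a : F} (ha : ∀ τ : F ≃ₐ[K] F, v (τ a - a) ≤ 1)
    (hak : ∀ k : K, 1 < v (a - algebraMap K F k)) {f : K[X]} (hf : f ≠ 0)
    (hsplits : (f.map (algebraMap K F)).Splits)
    (hdeg : ∀ n, 0 < n → n ≤ f.natDegree → v (n : F) = 1) :
    ∃ k : K, v (aeval (a + 1) f / aeval a f - 1) ≤ v (a - algebraMap K F k)⁻¹ := by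
  obtain ⟨k, hk⟩ : ∃ k : K, ∀ c, aeval c f = 0 → v (a - algebraMap K F k) ≤ v (a - c) := by
    rcases (f.rootSet F).eq_empty_or_nonempty with h_empty | hne
    · exact ⟨0, fun c hc => absurd (mem_rootSet.2 ⟨hf, hc⟩) (h_empty ▸ Set.notMem_empty c)⟩
    obtain ⟨c, hc, hmin⟩ := (f.rootSet F).exists_min_image (fun c => v (a - c))
      (f.rootSet_finite F) hne
    obtain ⟨k, hk⟩ := exists_valuation_sub_algebraMap_le hv ha <|
      hdeg _ (minpoly.natDegree_pos (Normal.isIntegral inferInstance c))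
        (natDegree_le_of_dvd (minpoly.dvd K c (mem_rootSet.1 hc).2) hf)
    exact ⟨k, fun c' hc' => ((le_max_iff.1 hk).resolve_right (hak k).not_ge).trans
      (hmin c' (mem_rootSet.2 ⟨hf, hc'⟩))⟩
  have hpos : 0 < v (a - algebraMap K F k) := zero_lt_one.trans (hak k)
  refine ⟨k, valuation_aeval_add_one_div_sub_one_le hf hsplits ?_ fun c hc => ⟨?_, ?_⟩⟩
  · rw [map_inv₀]
    exact inv_le_one_of_one_le₀ (hak k).le
  · exact sub_ne_zero.1 (v.pos_iff.1 (hpos.trans_le (hk c hc)))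
  · rw [map_inv₀, map_inv₀]
    exact inv_anti₀ hpos (hk c hc)

end Valuation

section ArtinSchreier

variable {K L : Type*} [Field K] [Field L] [Algebra K L] {σ : L ≃ₐ[K] L}

lemma exists_apply_eq_add_one {p : ℕ} [Fact p.Prime] [CharP L p] {n : ℕ} (hn : n ≠ 0)
    (horder : orderOf σ = p ^ n) : ∃ x, σ x = x + 1 := by
  have hone : σ ≠ 1 := fun h => (Nat.one_lt_pow hn (Nat.Prime.one_lt Fact.out)).ne <| by
    rw [← horder, h, orderOf_one]
  have : CharP K p := (Algebra.charP_iff K L p).2 inferInstance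
  have : CharP (Module.End K L) p :=
    charP_of_injective_algebraMap (FaithfulSMul.algebraMap_injective K (Module.End K L)) p
  let δ : Module.End K L := σ.toLinearMap - 1
  have hδ (y : L) : δ y = σ y - y := rfl
  have hnil : δ ^ p ^ n = 0 := by
    rw [sub_pow_char_pow_of_commute _ _ (Commute.one_right _), ← AlgEquiv.pow_toLinearMap,
      ← horder, pow_orderOf_eq_one, one_pow]
    exact sub_self _
  obtain ⟨y, hy, hy'⟩ : ∃ y, δ (δ y) = 0 ∧ δ y ≠ 0 := by
    by_contra! hker
    have hstable : LinearMap.ker (δ ^ 1) = LinearMap.ker (δ ^ Nat.succ 1) := by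
      refine le_antisymm (fun y hy => ?_) (fun y hy => ?_)
      · simp_all [pow_two]
      · simpa using hker y (by simpa [pow_two] using hy)
    have hconst := Module.End.ker_pow_constant hstable (p ^ n - 1)
    rw [Nat.add_sub_cancel' (pow_pos (Nat.Prime.pos Fact.out) n), hnil, LinearMap.ker_zero,
      pow_one, LinearMap.ker_eq_top] at hconst
    exact hone (AlgEquiv.ext fun y => sub_eq_zero.1 (LinearMap.congr_fun hconst y))
  refine ⟨y / δ y, ?_⟩
  rw [map_div₀, sub_eq_zero.1 ((hδ _).symm.trans hy), sub_eq_iff_eq_add'.1 (hδ y).symm, add_div,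
    div_self hy']

lemma pow_apply_eq_add_natCast {x : L} (hx : σ x = x + 1) (n : ℕ) : (σ ^ n) x = x + n := by
  induction n with
  | zero => simp
  | succ n ih => rw [pow_succ', AlgEquiv.mul_apply, ih, map_add, hx, map_natCast]; push_cast; ring

lemma apply_sub_algebraMap_eq_add_one {x : L} (hx : σ x = x + 1) (k : K) :
    σ (x - algebraMap K L k) = x - algebraMap K L k + 1 := by
  rw [map_sub, hx, AlgEquiv.commutes]
  ring

lemma ne_zero_of_apply_eq_add_one {x : L} (hx : σ x = x + 1) : x ≠ 0 := by
  rintro rfl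
  simp at hx

lemma notMem_range_algebraMap_of_apply_eq_add_one {x : L} (hx : σ x = x + 1) :
    x ∉ Set.range (algebraMap K L) := by
  rintro ⟨k, rfl⟩
  simp at hx

lemma one_le_valuation_of_apply_eq_add_one {Γ₀ : Type*} [LinearOrderedCommMonoidWithZero Γ₀]
    {w : Valuation L Γ₀} (hw : ∀ y, w (σ y) = w y) {x : L} (hx : σ x = x + 1) : 1 ≤ w x := by
  have h := w.map_sub (σ x) x
  rwa [hw, max_self, hx, add_sub_cancel_left, map_one] at h

lemma valuation_algEquiv_sub_le_one_of_apply_eq_add_one {F Γ₀ : Type*} [Field F] [Algebra K F]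
    [Algebra L F] [IsScalarTower K L F] [Normal K L] [FiniteDimensional K L]
    [LinearOrderedCommGroupWithZero Γ₀] (v : Valuation F Γ₀)
    (hσ : ∀ τ : L ≃ₐ[K] L, τ ∈ Subgroup.zpowers σ) {x : L} (hx : σ x = x + 1) (τ : F ≃ₐ[K] F) :
    v (τ (algebraMap L F x) - algebraMap L F x) ≤ 1 := by
  obtain ⟨n, hn⟩ := mem_powers_iff_mem_zpowers.2 (hσ (τ.restrictNormal L))
  rw [← AlgEquiv.restrictNormal_commutes, ← hn, pow_apply_eq_add_natCast hx, map_add,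
    add_sub_cancel_left, map_natCast]
  exact natCast_mem v.integer n

lemma exists_natDegree_lt_finrank_aeval_eq [FiniteDimensional K L]
    (hprime : (Module.finrank K L).Prime) {x : L} (hx : x ∉ Set.range (algebraMap K L)) (y : L) :
    ∃ f : Polynomial K, f.natDegree < Module.finrank K L ∧ Polynomial.aeval x f = y := by
  have := IntermediateField.isSimpleOrder_of_finrank_prime K L hprime
  have htop : IntermediateField.adjoin K {x} = ⊤ := (eq_bot_or_eq_top _).resolve_left fun h =>
    hx (IntermediateField.mem_bot.1 (IntermediateField.adjoin_simple_eq_bot_iff.1 h))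
  let pb := PowerBasis.ofAdjoinEqTop (Algebra.IsIntegral.isIntegral (R := K) x)
    (by rw [← IntermediateField.adjoin_simple_toSubalgebra_of_isAlgebraic
      (Algebra.IsAlgebraic.isAlgebraic x), htop, IntermediateField.top_toSubalgebra])
  obtain ⟨f, hf, rfl⟩ := pb.exists_eq_aeval y
  exact ⟨f, pb.finrank ▸ hf, by simp [pb]⟩

end ArtinSchreier

section AssociatedIdeal

section Definitions

variable (A : Type*) {K L : Type*} [CommRing A] [Field K] [Field L] [Algebra K L] [Algebra A L]

/-- The ideal `J_σ` of the integral closure of `A` in `L`, generated by the elements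
`σ x * x⁻¹ - 1` for `x ∈ Lˣ`. -/
def ratioIdeal (σ : L ≃ₐ[K] L) : Ideal (integralClosure A L) :=
  Ideal.span {b | ∃ x : Lˣ, (b : L) = σ x * (x : L)⁻¹ - 1}

variable {A} (K) in
/-- The ideal of `A` generated by the norms of the elements of an ideal `J` of the integral closure
of `A` in `L`, where norms are taken from `L` to the fraction field `K`. For `J = J_σ` this is the
ideal `H` associated to `L/K`. -/
def normIdeal [Algebra A K] (J : Ideal (integralClosure A L)) : Ideal A :=
  Ideal.span {a | ∃ b ∈ J, algebraMap A K a = Algebra.norm K (b : L)}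

end Definitions

variable {A K L Γ₀ : Type*} [CommRing A] [Field K] [Field L] [Algebra K L] [Algebra A L]
  [LinearOrderedCommGroupWithZero Γ₀] {w : Valuation L Γ₀} {σ : L ≃ₐ[K] L}

lemma exists_valuation_le_of_mem_ratioIdeal (hw : ∀ y, w y ≤ 1 ↔ IsIntegral A y)
    {b : integralClosure A L} (hb : b ∈ ratioIdeal A σ) :
    ∃ x : Lˣ, w b ≤ w (σ x * (x : L)⁻¹ - 1) := by
  let wB := w.comap (algebraMap (integralClosure A L) L)
  obtain ⟨c, ⟨x, hx⟩, hle⟩ := exists_mem_valuation_le_of_mem_span (v := wB)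
    (fun r => (hw r).2 r.2) (by exact ⟨0, 1, by simp⟩) hb
  exact ⟨x, hx ▸ hle⟩

variable [Algebra A K]

lemma exists_valuation_le_of_mem_normIdeal [IsDomain A] [ValuationRing A] [IsFractionRing A K]
    [FiniteDimensional K L] {J : Ideal (integralClosure A L)} {a : A} (ha : a ∈ normIdeal K J) :
    ∃ b ∈ J, valuation A K (algebraMap A K a) ≤ valuation A K (Algebra.norm K (b : L)) := by
  let vA := (valuation A K).comap (algebraMap A K)
  obtain ⟨c, ⟨b, hb, hc⟩, hle⟩ := exists_mem_valuation_le_of_mem_span (v := vA)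
    (fun r => (mem_integer_iff A K _).2 ⟨r, rfl⟩) (by exact ⟨0, 0, J.zero_mem, by simp⟩) ha
  exact ⟨b, hb, hc ▸ hle⟩

variable [IsScalarTower A K L]

lemma exists_mem_ratioIdeal_eq_inv [Algebra.IsAlgebraic K L] (hw : ∀ y, w y ≤ 1 ↔ IsIntegral A y)
    {x : L} (hx : σ x = x + 1) : ∃ b ∈ ratioIdeal A σ, (b : L) = x⁻¹ := by
  have hx0 := ne_zero_of_apply_eq_add_one hx
  have hle : w x⁻¹ ≤ 1 := by
    rw [map_inv₀]
    exact inv_le_one_of_one_le₀ (one_le_valuation_of_apply_eq_add_one (valuation_algEquiv hw σ) hx)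
  refine ⟨⟨x⁻¹, (hw _).1 hle⟩, Ideal.subset_span ⟨.mk0 x hx0, ?_⟩, rfl⟩
  simp [hx, add_mul, hx0]

lemma exists_mem_normIdeal_ratioIdeal_eq_norm_inv [IsDomain A] [IsIntegrallyClosed A]
    [IsFractionRing A K] [FiniteDimensional K L] (hw : ∀ y, w y ≤ 1 ↔ IsIntegral A y) {x : L}
    (hx : σ x = x + 1) :
    ∃ a ∈ normIdeal K (ratioIdeal A σ), a ≠ 0 ∧ algebraMap A K a = Algebra.norm K x⁻¹ := by
  obtain ⟨b, hb, hbx⟩ := exists_mem_ratioIdeal_eq_inv hw hx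
  obtain ⟨a, ha⟩ := IsIntegrallyClosed.isIntegral_iff.1 (Algebra.isIntegral_norm K b.2)
  refine ⟨a, Ideal.subset_span ⟨b, hb, ha⟩, ?_, hbx ▸ ha⟩
  rintro rfl
  rw [map_zero, hbx, eq_comm, Algebra.norm_eq_zero_iff] at ha
  exact inv_ne_zero (ne_zero_of_apply_eq_add_one hx) ha

lemma one_lt_valuation_of_normIdeal_ne_top [Algebra.IsAlgebraic K L]
    (hw : ∀ y, w y ≤ 1 ↔ IsIntegral A y) (hne : normIdeal K (ratioIdeal A σ) ≠ ⊤) {x : L}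
    (hx : σ x = x + 1) : 1 < w x := by
  by_contra! hle
  obtain ⟨b, hb, hbx⟩ := exists_mem_ratioIdeal_eq_inv hw hx
  have hmem : 1 ∈ ratioIdeal A σ := by
    convert (ratioIdeal A σ).mul_mem_left ⟨x, (hw x).1 hle⟩ hb
    ext
    simp [hbx, ne_zero_of_apply_eq_add_one hx]
  exact hne ((Ideal.eq_top_iff_one _).2 (Ideal.subset_span ⟨1, hmem, by simp⟩))

lemma exists_valuation_apply_mul_inv_sub_one_le [IsDomain A] [ValuationRing A]
    [HenselianLocalRing A] [IsFractionRing A K] [FiniteDimensional K L] [Normal K L] {p : ℕ}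
    [Fact p.Prime] [CharP L p]
    (hw : ∀ y, w y ≤ 1 ↔ IsIntegral A y) (hp : Module.finrank K L = p)
    (hσ : ∀ τ : L ≃ₐ[K] L, τ ∈ Subgroup.zpowers σ) {α : L} (hα : σ α = α + 1)
    (hlt : ∀ k : K, 1 < w (α - algebraMap K L k)) {x : L} (hx : x ≠ 0) :
    ∃ k : K, w (σ x * x⁻¹ - 1) ≤ w (α - algebraMap K L k)⁻¹ := by
  let F := AlgebraicClosure L
  have : Algebra.IsAlgebraic K F := .trans K L F
  have : IsAlgClosure K F := ⟨inferInstance, inferInstance⟩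
  have : Normal K F := IsAlgClosure.normal K F
  let v := (integralClosureValuationSubring A K F).valuation
  have hv (y : F) : v y ≤ 1 ↔ IsIntegral A y :=
    valuation_integralClosureValuationSubring_le_one_iff K
  have hequiv : w.IsEquiv (v.comap (algebraMap L F)) :=
    Valuation.isEquiv_iff_val_le_one.2 fun {y} => by
      rw [hw, Valuation.comap_apply, hv,
        isIntegral_algebraMap_iff (FaithfulSMul.algebraMap_injective L F)]
  have : CharP F p := charP_of_injective_algebraMap (FaithfulSMul.algebraMap_injective L F) p
  obtain ⟨f, hf, rfl⟩ := exists_natDegree_lt_finrank_aeval_eq (hp ▸ Fact.out)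
    (notMem_range_algebraMap_of_apply_eq_add_one hα) x
  have hmap (k : K) : algebraMap L F α - algebraMap K F k =
      algebraMap L F (α - algebraMap K L k) := by
    rw [map_sub, ← IsScalarTower.algebraMap_apply]
  obtain ⟨k, hk⟩ := exists_valuation_aeval_add_one_div_sub_one_le (valuation_algEquiv hv)
    (valuation_algEquiv_sub_le_one_of_apply_eq_add_one v hσ hα)
    (fun k => hmap k ▸ (hequiv.one_lt_iff_one_lt).1 (hlt k)) (f := f)
    (by rintro rfl; simp at hx) (IsAlgClosed.splits _)
    (fun n hn hle => valuation_natCast_eq_one_of_lt v hn (hle.trans_lt (hp ▸ hf)))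
  refine ⟨k, (hequiv _ _).2 ?_⟩
  rw [← Polynomial.aeval_algHom_apply, hα]
  convert hk using 2
  · simp [div_eq_mul_inv, ← Polynomial.aeval_algebraMap_apply]
  · rw [hmap, map_inv₀, map_inv₀, Valuation.comap_apply]

lemma valuation_norm_le_iff [IsDomain A] [ValuationRing A] [IsFractionRing A K]
    [FiniteDimensional K L] [IsGalois K L] (hw : ∀ y, w y ≤ 1 ↔ IsIntegral A y) {x y : L} :
    valuation A K (Algebra.norm K x) ≤ valuation A K (Algebra.norm K y) ↔ w x ≤ w y := by
  have := hasExtension_of_le_one_iff_isIntegral (A := A) (K := K) hw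
  rw [← Valuation.HasExtension.val_map_le_iff (vR := valuation A K) (vA := w),
    valuation_algebraMap_norm (valuation_algEquiv hw),
    valuation_algebraMap_norm (valuation_algEquiv hw),
    pow_le_pow_iff_left₀ zero_le zero_le Nat.card_pos.ne']

lemma valuation_inv_sub_pow_finrank_of_valuation_norm_inv_lt [IsDomain A] [ValuationRing A]
    [IsFractionRing A K] [FiniteDimensional K L] [IsGalois K L]
    (hw : ∀ y, w y ≤ 1 ↔ IsIntegral A y) {x : L} {k l : K} (hx : ∀ m : K, x - algebraMap K L m ≠ 0)
    (hlt : valuation A K (Algebra.norm K (x - algebraMap K L k)⁻¹) <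
      valuation A K (Algebra.norm K (x - algebraMap K L l)⁻¹)) :
    valuation A K (l - k)⁻¹ ^ Module.finrank K L =
      valuation A K (Algebra.norm K (x - algebraMap K L k)⁻¹) := by
  have hsub : algebraMap K L (l - k) = (x - algebraMap K L k) - (x - algebraMap K L l) := by
    rw [map_sub]
    ring
  have hltw : w (x - algebraMap K L l) < w (x - algebraMap K L k) := by
    rwa [lt_iff_lt_of_le_iff_le (valuation_norm_le_iff hw), map_inv₀, map_inv₀,
      inv_lt_inv₀ (w.pos_iff.2 (hx k)) (w.pos_iff.2 (hx l))] at hlt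
  have heq : w (algebraMap K L (l - k)⁻¹) = w (x - algebraMap K L k)⁻¹ := by
    rw [map_inv₀, map_inv₀, map_inv₀, hsub, w.map_sub_eq_of_lt_left hltw]
  rw [← map_pow, ← Algebra.norm_algebraMap]
  exact ((valuation_norm_le_iff hw).2 heq.le).antisymm ((valuation_norm_le_iff hw).2 heq.ge)

lemma exists_valuation_le_valuation_norm_inv [IsDomain A] [ValuationRing A]
    [HenselianLocalRing A] [IsFractionRing A K] [FiniteDimensional K L] [IsGalois K L] {p : ℕ}
    [Fact p.Prime] [CharP L p] (hw : ∀ y, w y ≤ 1 ↔ IsIntegral A y)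
    (hp : Module.finrank K L = p) (hσ : ∀ τ : L ≃ₐ[K] L, τ ∈ Subgroup.zpowers σ)
    (hne : normIdeal K (ratioIdeal A σ) ≠ ⊤) {α : L} (hα : σ α = α + 1) {a : A}
    (ha : a ∈ normIdeal K (ratioIdeal A σ)) :
    ∃ k : K, valuation A K (algebraMap A K a) ≤
      valuation A K (Algebra.norm K (α - algebraMap K L k)⁻¹) := by
  have hlt (k : K) : 1 < w (α - algebraMap K L k) :=
    one_lt_valuation_of_normIdeal_ne_top hw hne (apply_sub_algebraMap_eq_add_one hα k)
  obtain ⟨b, hb, hab⟩ := exists_valuation_le_of_mem_normIdeal ha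
  obtain ⟨x, hbx⟩ := exists_valuation_le_of_mem_ratioIdeal hw hb
  obtain ⟨k, hxk⟩ := exists_valuation_apply_mul_inv_sub_one_le hw hp hσ hα hlt x.ne_zero
  exact ⟨k, hab.trans ((valuation_norm_le_iff hw).2 (hbx.trans hxk))⟩

end AssociatedIdeal

/-- Let `A` be a Henselian valuation ring of characteristic `p > 0` which is not a field,
with fraction field `K`, and let `L/K` be a cyclic Galois extension of degree `p` with `B`
the integral closure of `A` in `L`.  Let `σ` be a generator of `Gal(L/K)`, let
`J_σ ⊆ B` be the ideal generated by the elements `σ(x)·x⁻¹ − 1` (`x ∈ Lˣ`), and let `H ⊆ A`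
be the associated ideal, generated by the norms of elements of `J_σ`; assume `H ≠ A`.
Let `C := {v_A(x) : x ∈ H, x ≠ 0}` (inside `ValuationRing.ValueGroup A K`, whose
multiplicative order is opposite to the additive order of values: `γ ≤ γ'` here iff
`γ ≥ γ'` additively, and `p·d ∈ C`, `p·d ≤ c` additively become `d^p ∈ C`, `c ≤ d^p`).
Then either `C` has an additively least element, or for every `c ∈ C` there is `d` in the
value group with `p·d ∈ C` and `p·d ≤ c` additively. -/
theorem assoc_ideal_value_set_min_or_p_divisible
    {A K L : Type*} [CommRing A] [IsDomain A] [ValuationRing A] [HenselianLocalRing A]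
    (hA : ¬IsField A)
    [Field K] [Algebra A K] [IsFractionRing A K]
    (p : ℕ) (hp : p.Prime) [CharP A p]
    [Field L] [Algebra K L] [Algebra A L] [IsScalarTower A K L]
    [IsGalois K L] [FiniteDimensional K L]
    [IsCyclic (L ≃ₐ[K] L)] (hcard : Nat.card (L ≃ₐ[K] L) = p)
    (σ : L ≃ₐ[K] L) (hσ : ∀ τ : L ≃ₐ[K] L, τ ∈ Subgroup.zpowers σ)
    (Jσ : Ideal ↥(integralClosure A L))
    (hJσ : Jσ = Ideal.span
      {b : ↥(integralClosure A L) | ∃ x : Lˣ, (b : L) = σ (x : L) * (x : L)⁻¹ - 1})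
    (H : Ideal A)
    (hH : H = Ideal.span
      {a : A | ∃ b ∈ Jσ, algebraMap A K a = Algebra.norm K ((b : L))})
    (hHne : H ≠ ⊤)
    (C : Set (ValueGroup A K))
    (hC : C = {γ : ValueGroup A K | ∃ a ∈ H, a ≠ 0 ∧ valuation A K (algebraMap A K a) = γ}) :
    (∃ c ∈ C, ∀ c' ∈ C, c' ≤ c) ∨
      ∀ c ∈ C, ∃ d : ValueGroup A K, d ≠ 0 ∧ d ^ p ∈ C ∧ c ≤ d ^ p := by
  have : Fact p.Prime := ⟨hp⟩
  have : FaithfulSMul A L := .trans A K L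
  have : CharP L p := charP_of_injective_algebraMap (FaithfulSMul.algebraMap_injective A L) p
  have hfinrank : Module.finrank K L = p := (IsGalois.card_aut_eq_finrank K L).symm.trans hcard
  have hw (y : L) := valuation_integralClosureValuationSubring_le_one_iff (A := A) K (y := y)
  obtain ⟨α, hα⟩ : ∃ α, σ α = α + 1 := exists_apply_eq_add_one (p := p) one_ne_zero <| by
    rw [pow_one, ← hcard, orderOf_eq_card_of_forall_mem_zpowers hσ]
  have hαk (k : K) := apply_sub_algebraMap_eq_add_one hα k
  subst hJσ hH hC
  refine or_iff_not_imp_left.2 fun hmax => ?_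
  push Not at hmax
  rintro _ ⟨a, ha, -, rfl⟩
  obtain ⟨k, hk⟩ := exists_valuation_le_valuation_norm_inv hw hfinrank hσ hHne hα ha
  obtain ⟨b, hb, hb0, hbk⟩ := exists_mem_normIdeal_ratioIdeal_eq_norm_inv hw (hαk k)
  obtain ⟨_, ⟨c, hc, -, rfl⟩, hlt⟩ := hmax _ ⟨b, hb, hb0, rfl⟩
  obtain ⟨l, hl⟩ := exists_valuation_le_valuation_norm_inv hw hfinrank hσ hHne hα hc
  have hpow : valuation A K (l - k)⁻¹ ^ p = valuation A K (algebraMap A K b) := by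
    rw [← hfinrank, hbk, valuation_inv_sub_pow_finrank_of_valuation_norm_inv_lt hw
      (fun m => ne_zero_of_apply_eq_add_one (hαk m)) (hbk ▸ hlt.trans_le hl)]
  refine ⟨valuation A K (l - k)⁻¹, ne_zero_pow hp.ne_zero ?_, ?_, ?_⟩ <;> rw [hpow]
  · simpa using hb0
  · exact ⟨b, hb, hb0, rfl⟩
  · exact hbk ▸ hk
end

section
/- Let p be a prime number, let Γ be a nonzero subgroup of the additive group ℝ which is not isomorphic to ℤ, and let a ∈ Γ with a > 0. Then there exist a field K of characteristic p, a Henselian valuation ring A with field of fractions K, a surjective valuation v : Kˣ → Γ (i.e. v(xy) = v(x) + v(y) and v(x + y) ≥ min(v(x), v(y)) whenever defined) with A = {0} ∪ {x ∈ Kˣ : v(x) ≥ 0}, and a cyclic Galois extension L/K of degree p, such that {v(x) : x ∈ H, x ≠ 0} = {γ ∈ Γ : γ ≥ a}, where H is the ideal of A associated to L/K. -/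
set_option synthInstance.maxHeartbeats 400000

/-- `H` is the ideal of `A` associated to a cyclic extension `L/K` of prime degree:
for any generator `σ` of `Gal(L/K)`, `H` is generated by the elements `a` of `A` whose image
in `K` is the norm of an element of the ideal `J_σ` of the integral closure `B` of `A` in `L`
generated by the elements `σ(x)·x⁻¹ − 1`, `x ∈ Lˣ`. -/
def IsAssociatedIdeal {K : Type} [Field K] (A : ValuationSubring K)
    (L : Type) [Field L] [Algebra K L] (H : Ideal ↥A) : Prop :=
  ∀ [instAL : Algebra ↥A L] [instTower : IsScalarTower ↥A K L] (σ : L ≃ₐ[K] L),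
    (∀ τ : L ≃ₐ[K] L, τ ∈ Subgroup.zpowers σ) →
    H = Ideal.span {a : ↥A |
      ∃ b ∈ Ideal.span {b : ↥(integralClosure ↥A L) |
          ∃ x : Lˣ, (b : L) = σ (x : L) * (x : L)⁻¹ - 1},
        algebraMap ↥A K a = Algebra.norm K ((b : L))}

/-!
Take `K = k((t^Γ))` with `k = 𝔽_p(X)`, and let `α` be a root of `x ^ p - x = c` with
`c = u t^(-a)`, where `u = X` is not a `p`-th power in `k`. The leading coefficient of `α` is
`u^(1/p)`, whose powers below the `p`-th are linearly independent over `k`; hence no cancellation of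
leading terms occurs in a `K`-linear combination of `1, α, …, α^(p-1)`. Since `σ α - α` is a nonzero
element of `𝔽_p`, it follows that `σ` changes any `x` by a relative error of value at most that of
`α⁻¹`, with equality for `x = α`. So `J_σ` is generated by `α⁻¹`, and `H` by its norm `c⁻¹`, which
has value exactly `a`.
-/

section ValuationSubring

variable {K Γ₀ : Type*} [Field K] [LinearOrderedAddCommGroupWithTop Γ₀]

theorem mem_span_singleton_iff_le_addValuation (w : AddValuation K Γ₀) {A : ValuationSubring K}
    (hA : ∀ x, x ∈ A ↔ 0 ≤ w x) {a x : A} :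
    x ∈ Ideal.span {a} ↔ w (a : K) ≤ w (x : K) := by
  have hw : w.toValuation.Integers A :=
    { hom_inj := Subtype.val_injective
      map_le_one := fun y => (hA y).1 y.2
      exists_of_le_one := fun {y} hy => ⟨⟨y, (hA y).2 hy⟩, rfl⟩ }
  exact Ideal.mem_span_singleton.trans hw.dvd_iff_le

end ValuationSubring

section HahnValuationSubring

open HahnSeries

variable {G k : Type*} [AddCommGroup G] [LinearOrder G] [IsOrderedAddMonoid G] [Field k]

variable (G k) in
/-- The valuation subring of all Hahn series of nonnegative order. -/
noncomputable def hahnValuationSubring : ValuationSubring (HahnSeries G k) :=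
  (addVal G k).toValuation.valuationSubring

theorem mem_hahnValuationSubring {x : HahnSeries G k} :
    x ∈ hahnValuationSubring G k ↔ 0 ≤ x.orderTop :=
  Iff.rfl

theorem mem_maximalIdeal_hahnValuationSubring {x : hahnValuationSubring G k} :
    x ∈ IsLocalRing.maximalIdeal (hahnValuationSubring G k) ↔
      0 < (x : HahnSeries G k).orderTop :=
  Valuation.mem_maximalIdeal_iff _ _

theorem smodEq_span_singleton_pow_iff_coeff_eq {π : hahnValuationSubring G k} {g : G}
    (hπ : (π : HahnSeries G k).orderTop = g) {n : ℕ} {x y : hahnValuationSubring G k} :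
    x ≡ y [SMOD Ideal.span {π} ^ n • (⊤ : Submodule (hahnValuationSubring G k) _)] ↔
      ∀ γ < n • g, (x : HahnSeries G k).coeff γ = (y : HahnSeries G k).coeff γ := by
  have hπn : addVal G k ((π ^ n : hahnValuationSubring G k) : HahnSeries G k) = (n • g : G) := by
    rw [SubmonoidClass.coe_pow, AddValuation.map_pow, addVal_apply, hπ, WithTop.coe_nsmul]
  rw [SModEq.sub_mem, smul_eq_mul, Ideal.mul_top, Ideal.span_singleton_pow,
    mem_span_singleton_iff_le_addValuation (addVal G k) fun _ => Iff.rfl, hπn, addVal_apply,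
    le_orderTop_iff_forall]
  simp only [WithTop.coe_lt_coe, AddSubgroupClass.coe_sub, coeff_sub, sub_eq_zero]

variable [Archimedean G]

theorem exists_hahnSeries_coeff_eq_of_lt_nsmul {g : G} (hg : 0 < g) (f : ℕ → HahnSeries G k)
    (hf : ∀ {m n}, m ≤ n → ∀ γ < m • g, (f m).coeff γ = (f n).coeff γ) :
    ∃ F : HahnSeries G k, ∀ n, ∀ γ < n • g, (f n).coeff γ = F.coeff γ := by
  choose N hN using exists_lt_nsmul hg
  have hcoeff (n : ℕ) (γ : G) (hγ : γ < n • g) : (f n).coeff γ = (f (N γ)).coeff γ := by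
    rcases le_total (N γ) n with hle | hle
    · exact (hf hle γ (hN γ)).symm
    · exact hf hle γ hγ
  refine ⟨⟨fun γ => (f (N γ)).coeff γ, Set.IsWF.isPWO ?_⟩, hcoeff⟩
  refine Set.isWF_iff_no_descending_seq.2 fun s hs hmem => ?_
  refine Set.isWF_iff_no_descending_seq.1 (f (N (s 0))).isWF_support s hs fun i => ?_
  rw [mem_support, hcoeff _ _ ((hs.antitone i.zero_le).trans_lt (hN (s 0)))]
  exact hmem i

theorem isAdicComplete_hahnValuationSubring {π : hahnValuationSubring G k} (hπ₀ : π ≠ 0)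
    (hπ : π ∈ IsLocalRing.maximalIdeal (hahnValuationSubring G k)) :
    IsAdicComplete (Ideal.span {π}) (hahnValuationSubring G k) := by
  obtain ⟨g, hg⟩ := WithTop.ne_top_iff_exists.1 (orderTop_ne_top.2 (Subtype.coe_ne_coe.2 hπ₀))
  have hg₀ : 0 < g := by
    rw [mem_maximalIdeal_hahnValuationSubring, ← hg] at hπ
    exact_mod_cast hπ
  refine { haus' := fun x hx => ?_, prec' := fun f hf => ?_ }
  · ext γ
    obtain ⟨n, hn⟩ := exists_lt_nsmul hg₀ γ
    exact (smodEq_span_singleton_pow_iff_coeff_eq hg.symm).1 (hx n) γ hn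
  · obtain ⟨F, hF⟩ := exists_hahnSeries_coeff_eq_of_lt_nsmul hg₀ (fun n => (f n : HahnSeries G k))
      fun hmn => (smodEq_span_singleton_pow_iff_coeff_eq hg.symm).1 (hf hmn)
    have hF₀ : F ∈ hahnValuationSubring G k := by
      refine mem_hahnValuationSubring.2 (le_orderTop_iff_forall.2 fun γ hγ => ?_)
      have hγ₀ : γ < 0 := by exact_mod_cast hγ
      rw [← hF 0 γ (by simpa using hγ₀)]
      exact coeff_eq_zero_of_lt_orderTop (hγ.trans_le (mem_hahnValuationSubring.1 (f 0).2))
    exact ⟨⟨F, hF₀⟩, fun n => (smodEq_span_singleton_pow_iff_coeff_eq hg.symm).2 (hF n)⟩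

instance henselianLocalRing_hahnValuationSubring :
    HenselianLocalRing (hahnValuationSubring G k) where
  is_henselian f hf a₀ ha₀ ha₀' := by
    by_cases hzero : f.eval a₀ = 0
    · exact ⟨a₀, hzero, by simp⟩
    have := isAdicComplete_hahnValuationSubring hzero ha₀
    obtain ⟨a, ha, haa₀⟩ := HenselianRing.is_henselian (I := Ideal.span {f.eval a₀}) f hf a₀
      (Ideal.mem_span_singleton_self _) (ha₀'.map _)
    exact ⟨a, ha, (Ideal.span_singleton_le_iff_mem _).2 ha₀ haa₀⟩

end HahnValuationSubring

section IntegralClosure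

variable {A K L Γ₀ : Type*} [CommRing A] [Field K] [Field L] [LinearOrderedCommGroupWithZero Γ₀]
  [Algebra K L] [Algebra A K] {w : Valuation L Γ₀}

theorem valuation_le_one_of_isIntegral [Algebra A L] [IsScalarTower A K L]
    (hA : (w.comap (algebraMap K L)).Integers A) {b : L} (hb : IsIntegral A b) : w b ≤ 1 := by
  have hle (a : A) : w (algebraMap A L a) ≤ 1 := by
    rw [IsScalarTower.algebraMap_apply A K L]
    exact hA.map_le_one a
  have hb' : IsIntegral w.integer b :=
    hb.map_of_comp_eq ((algebraMap A L).codRestrict w.integer hle) (RingHom.id L) rfl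
  exact (Valuation.integer.integers w).mem_of_integral hb'

theorem valuation_coeff_minpoly_le_one [IsGalois K L] [FiniteDimensional K L]
    (hw : ∀ (σ : L ≃ₐ[K] L) x, w (σ x) = w x) {b : L} (hb : w b ≤ 1) (n : ℕ) :
    w (algebraMap K L ((minpoly K b).coeff n)) ≤ 1 := by
  have hroots : ∀ x ∈ ((minpoly K b).map (algebraMap K L)).roots, x ∈ w.integer.subtype.range := by
    intro x hx
    have hx₀ : Polynomial.aeval x (minpoly K b) = 0 := by
      rw [Polynomial.aeval_def, ← Polynomial.eval_map]
      exact (Polynomial.mem_roots'.1 hx).2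
    obtain ⟨σ, rfl⟩ := minpoly.exists_algEquiv_of_root' (Algebra.IsAlgebraic.isAlgebraic b) hx₀
    exact ⟨⟨σ b, (hw σ b).trans_le hb⟩, rfl⟩
  have hlift := (Normal.splits (F := K) inferInstance b).mem_lift_of_roots_mem_range
    ((minpoly.monic (Algebra.IsIntegral.isIntegral b)).map _) w.integer.subtype hroots
  obtain ⟨y, hy⟩ := (Polynomial.lifts_iff_coeff_lifts _).1 hlift n
  rw [← Polynomial.coeff_map, ← hy]
  exact y.2

variable [IsGalois K L] [FiniteDimensional K L] [Algebra A L] [IsScalarTower A K L]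

theorem isIntegral_of_valuation_le_one (hA : (w.comap (algebraMap K L)).Integers A)
    (hw : ∀ (σ : L ≃ₐ[K] L) x, w (σ x) = w x) {b : L} (hb : w b ≤ 1) : IsIntegral A b := by
  have hlift : minpoly K b ∈ Polynomial.lifts (algebraMap A K) :=
    (Polynomial.lifts_iff_coeff_lifts _).2 fun n =>
      hA.exists_of_le_one (valuation_coeff_minpoly_le_one hw hb n)
  obtain ⟨q, hq, -, hmonic⟩ := Polynomial.lifts_and_degree_eq_and_monic hlift
    (minpoly.monic (Algebra.IsIntegral.isIntegral b))
  refine ⟨q, hmonic, ?_⟩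
  rw [IsScalarTower.algebraMap_eq A K L, ← Polynomial.eval₂_map, hq]
  exact minpoly.aeval K b

theorem integers_integralClosure (hA : (w.comap (algebraMap K L)).Integers A)
    (hw : ∀ (σ : L ≃ₐ[K] L) x, w (σ x) = w x) : w.Integers (integralClosure A L) where
  hom_inj := Subtype.val_injective
  map_le_one b := valuation_le_one_of_isIntegral hA b.2
  exists_of_le_one _ hb := ⟨⟨_, isIntegral_of_valuation_le_one hA hw hb⟩, rfl⟩

end IntegralClosure

section RamificationIdeal

variable {A K L Γ₀ : Type*} [CommRing A] [Field K] [Field L] [LinearOrderedCommGroupWithZero Γ₀]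
  [Algebra K L] [Algebra A L] {w : Valuation L Γ₀}

variable (A) in
/-- The ideal `J_σ` of the integral closure of `A` in `L`, generated by the elements
`σ(x)·x⁻¹ − 1` which lie in that integral closure. -/
def ramificationIdeal (σ : L ≃ₐ[K] L) : Ideal (integralClosure A L) :=
  Ideal.span {b | ∃ x : Lˣ, (b : L) = σ (x : L) * (x : L)⁻¹ - 1}

theorem ramificationIdeal_eq_span_singleton (hB : w.Integers (integralClosure A L))
    {σ : L ≃ₐ[K] L} {b₀ : integralClosure A L} (hle : ∀ x, w (σ x - x) ≤ w b₀ * w x)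
    {x₀ : Lˣ} (hge : w b₀ ≤ w (σ x₀ * (x₀ : L)⁻¹ - 1)) :
    ramificationIdeal A σ = Ideal.span {b₀} := by
  have hle' (x : Lˣ) : w (σ x * (x : L)⁻¹ - 1) ≤ w b₀ := by
    have hx : w x ≠ 0 := (Valuation.ne_zero_iff w).2 x.ne_zero
    rw [← mul_le_mul_iff_left₀ (zero_lt_iff.2 hx), ← map_mul, sub_mul, mul_assoc,
      inv_mul_cancel₀ x.ne_zero, mul_one, one_mul]
    exact hle x
  refine le_antisymm (Ideal.span_le.2 ?_) ((Ideal.span_singleton_le_iff_mem _).2 ?_)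
  · rintro b ⟨x, hx⟩
    refine Ideal.mem_span_singleton.2 (hB.dvd_iff_le.2 ?_)
    exact (congrArg w hx).trans_le (hle' x)
  · obtain ⟨b, hb⟩ := hB.exists_of_le_one ((hle' x₀).trans (hB.map_le_one b₀))
    refine Ideal.mem_of_dvd _ (hB.dvd_iff_le.2 ?_) (Ideal.subset_span ⟨x₀, hb⟩)
    exact hge.trans_eq (congrArg w hb.symm)

theorem span_norm_span_singleton [Algebra A K] [IsScalarTower A K L] {v : Valuation K Γ₀}
    (hA : v.Integers A) {b₀ : integralClosure A L} {a₀ : A}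
    (h : algebraMap A K a₀ = Algebra.norm K (b₀ : L)) :
    Ideal.span {a : A | ∃ b ∈ Ideal.span {b₀}, algebraMap A K a = Algebra.norm K (b : L)} =
      Ideal.span {a₀} := by
  refine le_antisymm (Ideal.span_le.2 ?_) (Ideal.span_mono ?_)
  · rintro a ⟨b, hb, hab⟩
    obtain ⟨c, rfl⟩ := Ideal.mem_span_singleton.1 hb
    have hc : IsIntegral A (Algebra.norm K (c : L)) := Algebra.isIntegral_norm K c.2
    obtain ⟨d, hd⟩ := hA.exists_of_le_one (hA.mem_of_integral hc)
    refine Ideal.mem_span_singleton.2 ⟨d, hA.hom_inj ?_⟩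
    rw [hab, map_mul, h, hd, ← map_mul]
    rfl
  · rintro _ rfl
    exact ⟨b₀, Ideal.mem_span_singleton_self b₀, h⟩

end RamificationIdeal

section ValuationIndependent

variable {K L Γ₀ ι : Type*} [Field K] [Field L] [LinearOrderedCommGroupWithZero Γ₀] [Algebra K L]
  [Fintype ι] {w : Valuation L Γ₀}

variable (K) in
/-- A finite family is valuation independent over `K` if no term of a `K`-linear combination
has larger value than the sum, i.e. no cancellation of leading terms occurs. -/
def ValuationIndependent (w : Valuation L Γ₀) (b : ι → L) : Prop :=
  ∀ (c : ι → K) (i : ι), w (c i • b i) ≤ w (∑ j, c j • b j)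

theorem ValuationIndependent.linearIndependent {b : ι → L} (hb : ValuationIndependent K w b)
    (hb₀ : ∀ i, b i ≠ 0) : LinearIndependent K b := by
  refine Fintype.linearIndependent_iff.2 fun c hc i => ?_
  have hi : w (c i • b i) ≤ 0 := (hb c i).trans_eq (by rw [hc, map_zero])
  exact (smul_eq_zero.1 ((Valuation.zero_iff w).1 (le_zero_iff.1 hi))).resolve_right (hb₀ i)

theorem valuation_pow_sub_pow_mul_le {y z : L} (hyz : w y ≤ w z) (n : ℕ) :
    w (y ^ n - z ^ n) * w z ≤ w (y - z) * w (z ^ n) := by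
  induction n with
  | zero => simp
  | succ n ih =>
    have hsplit : y ^ (n + 1) - z ^ (n + 1) = y ^ n * (y - z) + (y ^ n - z ^ n) * z := by ring
    rw [hsplit, pow_succ z, map_mul, ← mul_assoc]
    refine mul_le_mul_left (w.map_add_le ?_ ?_) _
    · rw [map_mul, mul_comm, map_pow, map_pow]
      gcongr
    · rwa [map_mul]

theorem valuation_algEquiv_sub_mul_le (pb : PowerBasis K L)
    (hind : ValuationIndependent K w pb.basis) {σ : L ≃ₐ[K] L} (hσ : w (σ pb.gen) ≤ w pb.gen)
    (x : L) : w (σ x - x) * w pb.gen ≤ w (σ pb.gen - pb.gen) * w x := by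
  set c := pb.basis.repr x
  have hx : ∑ i, c i • pb.basis i = x := pb.basis.sum_repr x
  have hsum : (σ x - x) * pb.gen =
      ∑ i, c i • ((σ pb.gen ^ (i : ℕ) - pb.gen ^ (i : ℕ)) * pb.gen) := by
    conv_lhs => rw [← hx, map_sum, ← Finset.sum_sub_distrib, Finset.sum_mul]
    simp only [map_smul, pb.basis_eq_pow, map_pow, ← smul_sub, smul_mul_assoc]
  rw [← map_mul, hsum]
  refine w.map_sum_le fun i _ => ?_
  calc w (c i • ((σ pb.gen ^ (i : ℕ) - pb.gen ^ (i : ℕ)) * pb.gen))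
      = w (algebraMap K L (c i)) *
          (w (σ pb.gen ^ (i : ℕ) - pb.gen ^ (i : ℕ)) * w pb.gen) := by
        rw [Algebra.smul_def, map_mul, map_mul]
    _ ≤ w (algebraMap K L (c i)) * (w (σ pb.gen - pb.gen) * w (pb.gen ^ (i : ℕ))) := by
        exact mul_le_mul_right (valuation_pow_sub_pow_mul_le hσ i) _
    _ = w (σ pb.gen - pb.gen) * w (c i • pb.basis i) := by
        rw [pb.basis_eq_pow, Algebra.smul_def, map_mul, mul_left_comm]
    _ ≤ w (σ pb.gen - pb.gen) * w x := by
        gcongr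
        exact (hind c i).trans_eq (congrArg w hx)

theorem valuation_eq_one_of_pow_eq_self {j : L} (hj : j ≠ 0) {n : ℕ} (hn : 1 < n)
    (h : j ^ n = j) : w j = 1 := by
  have hpow : j ^ (n - 1) = 1 := by
    rw [← mul_left_inj' hj, ← pow_succ, Nat.sub_add_cancel hn.le, h, one_mul]
  exact (pow_eq_one_iff.1 (by rw [← map_pow, hpow, map_one])).resolve_right
    (Nat.sub_ne_zero_of_lt hn)

end ValuationIndependent

section ArtinSchreierPoly

open Polynomial

variable {K L : Type*} [Field K] [Field L] [Algebra K L] {p : ℕ} {c : K}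

variable (p c) in
/-- The Artin–Schreier polynomial `X ^ p - X - c`, whose roots differ by elements of the prime
field in characteristic `p`. -/
noncomputable def artinSchreierPoly : K[X] :=
  X ^ p - X - C c

theorem aeval_artinSchreierPoly_eq_zero_iff {x : L} :
    aeval x (artinSchreierPoly p c) = 0 ↔ x ^ p - x = algebraMap K L c := by
  simp [artinSchreierPoly, sub_eq_zero]

theorem separable_artinSchreierPoly [CharP K p] : (artinSchreierPoly p c).Separable := by
  have hderiv : derivative (artinSchreierPoly p c) = -1 := by
    simp [artinSchreierPoly, derivative_X_pow]
  rw [Polynomial.Separable, hderiv]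
  exact isCoprime_one_right.neg_right

theorem gen_pow_sub_gen_of_minpoly_eq {pb : PowerBasis K L}
    (hmin : minpoly K pb.gen = artinSchreierPoly p c) : pb.gen ^ p - pb.gen = algebraMap K L c :=
  aeval_artinSchreierPoly_eq_zero_iff.1 (hmin ▸ minpoly.aeval K pb.gen)

variable [hp : Fact p.Prime]

theorem natDegree_artinSchreierPoly : (artinSchreierPoly p c).natDegree = p := by
  rw [artinSchreierPoly, natDegree_sub_C, FiniteField.X_pow_card_sub_X_natDegree_eq K hp.out.one_lt]

theorem monic_artinSchreierPoly : (artinSchreierPoly p c).Monic := by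
  rw [artinSchreierPoly, sub_sub]
  refine monic_X_pow_sub (degree_X_add_C c |>.trans_lt ?_)
  exact_mod_cast hp.out.one_lt

theorem splits_artinSchreierPoly [CharP L p] {α : L} (hα : α ^ p - α = algebraMap K L c) :
    ((artinSchreierPoly p c).map (algebraMap K L)).Splits := by
  have htranslate : (artinSchreierPoly p c).map (algebraMap K L) =
      ((X ^ p - X : (ZMod p)[X]).map (ZMod.castHom dvd_rfl L)).comp (X - C α) := by
    simp only [artinSchreierPoly, Polynomial.map_sub, Polynomial.map_pow, map_X, map_C, sub_comp,
      pow_comp, X_comp, sub_pow_char, ← hα, map_sub, map_pow]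
    ring
  rw [htranslate]
  exact ((GaloisField.splits_zmod_X_pow_sub_X p).map _).comp_of_natDegree_le_one (by simp)

variable {pb : PowerBasis K L} (hmin : minpoly K pb.gen = artinSchreierPoly p c)

include hmin

variable [CharP K p]

theorem isGalois_of_minpoly_eq_artinSchreierPoly : IsGalois K L := by
  have : CharP L p := charP_of_injective_algebraMap (algebraMap K L).injective p
  have : (artinSchreierPoly p c).IsSplittingField K L :=
    { splits' := splits_artinSchreierPoly (gen_pow_sub_gen_of_minpoly_eq hmin)
      adjoin_rootSet' := by
        refine top_unique (pb.adjoin_gen_eq_top.ge.trans (Algebra.adjoin_mono ?_))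
        rw [Set.singleton_subset_iff, ← hmin]
        exact mem_rootSet.2 ⟨minpoly.ne_zero pb.isIntegral_gen, minpoly.aeval K pb.gen⟩ }
  exact IsGalois.of_separable_splitting_field (p := artinSchreierPoly p c)
    separable_artinSchreierPoly

theorem norm_gen_of_minpoly_eq_artinSchreierPoly : Algebra.norm K pb.gen = c := by
  have hdim : pb.dim = p := by rw [← pb.natDegree_minpoly, hmin, natDegree_artinSchreierPoly]
  rw [Algebra.PowerBasis.norm_gen_eq_coeff_zero_minpoly, hmin, hdim, neg_one_pow_char]
  simp [artinSchreierPoly, hp.out.ne_zero.symm]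

theorem card_algEquiv_of_minpoly_eq_artinSchreierPoly : Nat.card (L ≃ₐ[K] L) = p := by
  have := isGalois_of_minpoly_eq_artinSchreierPoly hmin
  have := pb.finite
  rw [IsGalois.card_aut_eq_finrank, pb.finrank, ← pb.natDegree_minpoly, hmin,
    natDegree_artinSchreierPoly]

end ArtinSchreierPoly

section ArtinSchreierExtension

variable {K L Γ₀ : Type*} [Field K] [Field L] [LinearOrderedCommGroupWithZero Γ₀] [Algebra K L]
  {p : ℕ} [hp : Fact p.Prime] {c : K} {pb : PowerBasis K L} {w : Valuation L Γ₀}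

theorem algEquiv_gen_sub_gen_pow [CharP L p] (hmin : minpoly K pb.gen = artinSchreierPoly p c)
    (σ : L ≃ₐ[K] L) : (σ pb.gen - pb.gen) ^ p = σ pb.gen - pb.gen := by
  have hα := gen_pow_sub_gen_of_minpoly_eq hmin
  have hσα : σ pb.gen ^ p - σ pb.gen = algebraMap K L c := by
    rw [← map_pow, ← map_sub, hα, σ.commutes]
  rw [sub_pow_char]
  linear_combination hσα - hα

theorem algEquiv_gen_ne_gen {σ : L ≃ₐ[K] L} (hσ : σ ≠ 1) : σ pb.gen ≠ pb.gen := fun h =>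
  hσ (AlgEquiv.coe_toAlgHom_injective (pb.algHom_ext h))

variable [CharP L p] (hmin : minpoly K pb.gen = artinSchreierPoly p c)

include hmin

theorem valuation_algEquiv_gen_sub_gen {σ : L ≃ₐ[K] L} (hσ : σ ≠ 1) :
    w (σ pb.gen - pb.gen) = 1 :=
  valuation_eq_one_of_pow_eq_self (sub_ne_zero.2 (algEquiv_gen_ne_gen hσ)) hp.out.one_lt
    (algEquiv_gen_sub_gen_pow hmin σ)

variable (hind : ValuationIndependent K w pb.basis) (hgen : 1 < w pb.gen)

include hind hgen

theorem valuation_algEquiv_sub_le (σ : L ≃ₐ[K] L) (x : L) :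
    w (σ x - x) ≤ w pb.gen⁻¹ * w x := by
  rcases eq_or_ne σ 1 with rfl | hσ
  · simp
  have hdiff : w (σ pb.gen - pb.gen) = 1 := valuation_algEquiv_gen_sub_gen hmin hσ
  have hσgen : w (σ pb.gen) = w pb.gen := w.map_eq_of_sub_lt (hdiff.trans_lt hgen)
  have hmul := valuation_algEquiv_sub_mul_le pb hind hσgen.le x
  rw [hdiff, one_mul] at hmul
  rw [map_inv₀, ← div_eq_inv_mul]
  exact (le_div_iff₀ (zero_lt_one.trans hgen)).2 hmul

theorem valuation_algEquiv_s15 (σ : L ≃ₐ[K] L) (x : L) : w (σ x) = w x := by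
  rcases eq_or_ne x 0 with rfl | hx
  · rw [map_zero]
  refine w.map_eq_of_sub_lt ((valuation_algEquiv_sub_le hmin hind hgen σ x).trans_lt ?_)
  refine mul_lt_of_lt_one_left (zero_lt_iff.2 ((Valuation.ne_zero_iff w).2 hx)) ?_
  rw [map_inv₀]
  exact inv_lt_one_of_one_lt₀ hgen

theorem ramificationIdeal_eq_span_inv_gen {A : Type*} [CommRing A] [Algebra A L]
    (hB : w.Integers (integralClosure A L)) {σ : L ≃ₐ[K] L} (hσ : σ ≠ 1)
    {b₀ : integralClosure A L} (hb₀ : (b₀ : L) = pb.gen⁻¹) :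
    ramificationIdeal A σ = Ideal.span {b₀} := by
  have hgen₀ : pb.gen ≠ 0 := (Valuation.ne_zero_iff w).1 (zero_lt_one.trans hgen).ne'
  refine ramificationIdeal_eq_span_singleton hB (x₀ := Units.mk0 _ hgen₀)
    (fun x => hb₀ ▸ valuation_algEquiv_sub_le hmin hind hgen σ x) (le_of_eq ?_)
  have hquot : σ pb.gen * pb.gen⁻¹ - 1 = (σ pb.gen - pb.gen) * pb.gen⁻¹ := by
    rw [sub_mul, mul_inv_cancel₀ hgen₀]
  rw [Units.val_mk0, hquot, map_mul, valuation_algEquiv_gen_sub_gen hmin hσ, one_mul, hb₀]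

end ArtinSchreierExtension

section AssociatedIdeal

variable {K L : Type} {Γ₀ : Type*} [Field K] [Field L] [LinearOrderedCommGroupWithZero Γ₀]
  [Algebra K L] {p : ℕ} [hp : Fact p.Prime] [CharP K p] {c : K} {pb : PowerBasis K L}
  {w : Valuation L Γ₀} {A : ValuationSubring K} (hA : (w.comap (algebraMap K L)).Integers A)
  (hmin : minpoly K pb.gen = artinSchreierPoly p c) (hind : ValuationIndependent K w pb.basis)
  (hgen : 1 < w pb.gen) {a₀ : A} (ha₀ : (a₀ : K) = c⁻¹)

include hA hmin hind hgen ha₀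

theorem span_norm_ramificationIdeal_eq_span_inv [Algebra A L] [IsScalarTower A K L]
    {σ : L ≃ₐ[K] L} (hσ : σ ≠ 1) :
    Ideal.span {a : A | ∃ b ∈ ramificationIdeal A σ, algebraMap A K a = Algebra.norm K (b : L)} =
      Ideal.span {a₀} := by
  have := isGalois_of_minpoly_eq_artinSchreierPoly hmin
  have := pb.finite
  have : CharP L p := charP_of_injective_algebraMap (algebraMap K L).injective p
  have hB : w.Integers (integralClosure A L) :=
    integers_integralClosure hA (valuation_algEquiv_s15 hmin hind hgen)
  obtain ⟨b₀, hb₀⟩ : ∃ b₀ : integralClosure A L, (b₀ : L) = pb.gen⁻¹ :=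
    hB.exists_of_le_one ((map_inv₀ w _).trans_le (inv_le_one_of_one_le₀ hgen.le))
  rw [ramificationIdeal_eq_span_inv_gen hmin hind hgen hB hσ hb₀]
  refine span_norm_span_singleton hA ?_
  rw [hb₀, Algebra.norm_inv, norm_gen_of_minpoly_eq_artinSchreierPoly hmin]
  exact ha₀

theorem isAssociatedIdeal_iff_eq_span_inv {H : Ideal A} :
    IsAssociatedIdeal A L H ↔ H = Ideal.span {a₀} := by
  have := pb.finite
  have hcard : Nat.card (L ≃ₐ[K] L) = p := card_algEquiv_of_minpoly_eq_artinSchreierPoly hmin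
  have : Nontrivial (L ≃ₐ[K] L) := Finite.one_lt_card_iff_nontrivial.1 (hcard ▸ hp.out.one_lt)
  constructor
  · intro hH
    let _ : Algebra A L := ((algebraMap K L).comp A.subtype).toAlgebra
    have : IsScalarTower A K L := .of_algebraMap_eq fun _ => rfl
    obtain ⟨σ, hσ⟩ := exists_ne (1 : L ≃ₐ[K] L)
    refine (hH σ fun τ => mem_zpowers_of_prime_card hcard hσ).trans ?_
    exact span_norm_ramificationIdeal_eq_span_inv hA hmin hind hgen ha₀ hσ
  · rintro rfl _ _ σ hσ
    refine (span_norm_ramificationIdeal_eq_span_inv hA hmin hind hgen ha₀ ?_).symm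
    rintro rfl
    obtain ⟨τ, hτ⟩ := exists_ne (1 : L ≃ₐ[K] L)
    exact hτ (Subgroup.mem_bot.1 (Subgroup.zpowers_one_eq_bot (G := L ≃ₐ[K] L) ▸ hσ τ))

end AssociatedIdeal

section HahnCoeff

open HahnSeries

theorem exists_hahnSeries_coeff_eq_of_strictMono {G F : Type*} [LinearOrder G] [Semiring F]
    {e : ℕ → G} (he : StrictMono e) (ρ : ℕ → F) :
    ∃ x : HahnSeries G F, (∀ n, x.coeff (e n) = ρ n) ∧ ∀ g ∉ Set.range e, x.coeff g = 0 := by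
  let ε := OrderEmbedding.ofStrictMono e he
  refine ⟨embDomain ε (toPowerSeries.symm (PowerSeries.mk ρ)), fun n => ?_, fun g hg =>
    embDomain_of_notMem_range hg⟩
  exact embDomain_coeff.trans (by rw [coeff_toPowerSeries_symm, PowerSeries.coeff_mk])

variable {G F : Type*} [AddCommGroup G] [LinearOrder G] [IsOrderedAddMonoid G] [Field F]

theorem hahnSeries_coeff_add_mul {x y : HahnSeries G F} {r s : G} (hx : r ≤ x.orderTop)
    (hy : s ≤ y.orderTop) : (x * y).coeff (r + s) = x.coeff r * y.coeff s := by
  have hxy : x.orderTop + y.orderTop = (x * y).orderTop := (orderTop_mul x y).symm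
  rcases hx.lt_or_eq with hx | hx
  · rw [coeff_eq_zero_of_lt_orderTop hx, zero_mul]
    exact coeff_eq_zero_of_lt_orderTop
      ((WithTop.add_lt_add_of_lt_of_le WithTop.coe_ne_top hx hy).trans_eq hxy)
  rcases hy.lt_or_eq with hy | hy
  · rw [coeff_eq_zero_of_lt_orderTop hy, mul_zero]
    exact coeff_eq_zero_of_lt_orderTop
      ((WithTop.add_lt_add_of_le_of_lt WithTop.coe_ne_top hx.le hy).trans_eq hxy)
  have hx₀ : x ≠ 0 := orderTop_ne_top.1 (hx ▸ WithTop.coe_ne_top)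
  have hy₀ : y ≠ 0 := orderTop_ne_top.1 (hy ▸ WithTop.coe_ne_top)
  rw [← order_eq_orderTop_of_ne_zero hx₀, WithTop.coe_inj] at hx
  rw [← order_eq_orderTop_of_ne_zero hy₀, WithTop.coe_inj] at hy
  rw [hx, hy, coeff_mul_order_add_order, leadingCoeff_eq, leadingCoeff_eq]

theorem hahnSeries_coeff_nsmul_pow {x : HahnSeries G F} {r : G} (hx : r ≤ x.orderTop) (n : ℕ) :
    (x ^ n).coeff (n • r) = x.coeff r ^ n := by
  induction n with
  | zero => simp
  | succ n ih =>
    have hn : (n • r : G) ≤ (x ^ n).orderTop :=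
      (WithTop.coe_nsmul r n ▸ nsmul_le_nsmul_right hx n).trans orderTop_nsmul_le_orderTop_pow
    rw [pow_succ, succ_nsmul, hahnSeries_coeff_add_mul hn hx, ih, pow_succ]

theorem lt_nsmul_of_mem_support_pow {x : HahnSeries G F} {g : G} (hx : ∀ r ∈ x.support, r < g)
    {n : ℕ} (hn : 1 ≤ n) : ∀ r ∈ (x ^ n).support, r < n • g := by
  induction n, hn using Nat.le_induction with
  | base => simpa using hx
  | succ n _ ih =>
    intro r hr
    rw [pow_succ] at hr
    obtain ⟨s, hs, t, ht, rfl⟩ := support_mul_subset hr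
    rw [succ_nsmul]
    exact add_lt_add (ih s hs) (hx t ht)

-- Split off the part of `x` supported below `g`: the `p`-th power is additive on this splitting.
theorem hahnSeries_coeff_nsmul_pow_char (p : ℕ) [hp : Fact p.Prime] [CharP F p]
    (x : HahnSeries G F) (g : G) : (x ^ p).coeff (p • g) = x.coeff g ^ p := by
  have : CharP (HahnSeries G F) p := charP_of_injective_ringHom (f := C) C_injective p
  set y := truncLT g x
  have hy : ∀ r ∈ y.support, r < g := fun r hr => (support_truncLT g x ▸ hr).2
  have hxy : g ≤ (x - y).orderTop := le_orderTop_iff_forall.2 fun r hr => by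
    rw [coeff_sub, coeff_truncLT_of_lt (WithTop.coe_lt_coe.1 hr), sub_self]
  have hyp : (y ^ p).coeff (p • g) = 0 := by
    by_contra h
    exact lt_irrefl _ (lt_nsmul_of_mem_support_pow hy hp.out.one_le _ h)
  calc (x ^ p).coeff (p • g) = ((x - y) ^ p).coeff (p • g) := by
        rw [sub_pow_char, coeff_sub, hyp, sub_zero]
    _ = (x - y).coeff g ^ p := hahnSeries_coeff_nsmul_pow hxy p
    _ = x.coeff g ^ p := by rw [coeff_sub, coeff_truncLT_of_le le_rfl, sub_zero]

theorem hahnSeries_leadingCoeff_pow (x : HahnSeries G F) (n : ℕ) :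
    (x ^ n).leadingCoeff = x.leadingCoeff ^ n := by
  induction n with
  | zero => simp
  | succ n ih => rw [pow_succ, leadingCoeff_mul, ih, pow_succ]

end HahnCoeff

section RadicalPowers

open Polynomial

theorem linearIndependent_pow_of_pow_prime_eq {k F : Type*} [Field k] [Field F] [Algebra k F]
    {p : ℕ} (hp : p.Prime) {u : k} (hu : ∀ b : k, b ^ p ≠ u) {θ : F}
    (hθ : θ ^ p = algebraMap k F u) : LinearIndependent k fun i : Fin p => θ ^ (i : ℕ) := by
  have hmin : minpoly k θ = X ^ p - C u :=
    (minpoly.eq_of_irreducible_of_monic (X_pow_sub_C_irreducible_of_prime hp hu) (by simp [hθ])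
      (monic_X_pow_sub_C u hp.ne_zero)).symm
  have hdeg : (minpoly k θ).natDegree = p := by rw [hmin, natDegree_X_pow_sub_C]
  have hlin := linearIndependent_pow (K := k) θ
  rwa [hdeg] at hlin

end RadicalPowers

section ValuationIndependentHahn

open HahnSeries

variable {k F G K ι : Type*} [Field k] [Field F] [Algebra k F] [AddCommGroup G] [LinearOrder G]
  [IsOrderedAddMonoid G] [Field K] [Algebra K (HahnSeries G F)] [Fintype ι]

theorem orderTop_sum_le_of_linearIndependent_leadingCoeff {x b : ι → HahnSeries G F}
    (hx : ∀ i r, (x i).coeff r ∈ (algebraMap k F).range) (hb₀ : ∀ i, b i ≠ 0)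
    (hb : LinearIndependent k fun i => (b i).leadingCoeff) (i : ι) :
    (∑ j, x j * b j).orderTop ≤ (x i * b i).orderTop := by
  obtain ⟨i₀, -, hmin⟩ := Finset.exists_min_image Finset.univ (fun j => (x j * b j).orderTop)
    ⟨i, Finset.mem_univ i⟩
  refine le_trans ?_ (hmin i (Finset.mem_univ i))
  rcases eq_or_ne (x i₀ * b i₀).orderTop ⊤ with htop | htop
  · exact htop ▸ le_top
  obtain ⟨r, hr⟩ := WithTop.ne_top_iff_exists.1 htop
  have hcoeff (j : ι) :
      (x j * b j).coeff r = (x j).coeff (r - (b j).order) * (b j).leadingCoeff := by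
    have hbj : ((b j).order : WithTop G) = (b j).orderTop := order_eq_orderTop_of_ne_zero (hb₀ j)
    have hxj : ((r - (b j).order : G) : WithTop G) ≤ (x j).orderTop := by
      have hrj := hr.trans_le (hmin j (Finset.mem_univ j))
      rw [orderTop_mul, ← hbj] at hrj
      refine WithTop.le_of_add_le_add_right (WithTop.coe_ne_top (a := (b j).order)) ?_
      rwa [← WithTop.coe_add, sub_add_cancel]
    rw [leadingCoeff_eq, ← hahnSeries_coeff_add_mul hxj hbj.le, sub_add_cancel]
  choose y hy using fun j => hx j (r - (b j).order)
  have hterm (j : ι) : (x j * b j).coeff r = y j • (b j).leadingCoeff := by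
    rw [hcoeff, ← hy, Algebra.smul_def]
  rw [← hr]
  refine orderTop_le_of_coeff_ne_zero fun hsum => coeff_orderTop_ne hr.symm ?_
  simp only [coeff_sum, hterm] at hsum
  rw [hterm, Fintype.linearIndependent_iff.1 hb y hsum i₀, zero_smul]

theorem valuationIndependent_of_linearIndependent_leadingCoeff
    (hK : ∀ (x : K) r, (algebraMap K (HahnSeries G F) x).coeff r ∈ (algebraMap k F).range)
    {b : ι → HahnSeries G F} (hb₀ : ∀ i, b i ≠ 0)
    (hb : LinearIndependent k fun i => (b i).leadingCoeff) :
    ValuationIndependent K (addVal G F).toValuation b := fun c i => by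
  simp only [Algebra.smul_def]
  exact orderTop_sum_le_of_linearIndependent_leadingCoeff (fun j => hK (c j)) hb₀ hb i

theorem valuationIndependent_pow_of_leadingCoeff_pow_eq
    (hK : ∀ (x : K) r, (algebraMap K (HahnSeries G F) x).coeff r ∈ (algebraMap k F).range)
    {p : ℕ} (hp : p.Prime) {u : k} (hu : ∀ b : k, b ^ p ≠ u) {α : HahnSeries G F}
    (hα : α.leadingCoeff ^ p = algebraMap k F u) :
    ValuationIndependent K (addVal G F).toValuation fun i : Fin p => α ^ (i : ℕ) := by
  have hα₀ : α ≠ 0 := by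
    rintro rfl
    refine hu 0 ((algebraMap k F).injective ?_)
    rw [← hα, leadingCoeff_zero, map_pow, map_zero]
  refine valuationIndependent_of_linearIndependent_leadingCoeff hK (fun i => pow_ne_zero _ hα₀) ?_
  simp only [hahnSeries_leadingCoeff_pow]
  exact linearIndependent_pow_of_pow_prime_eq hp hu hα

end ValuationIndependentHahn

section ArtinSchreierRoot

open HahnSeries

variable {R F : Type*} [Field R] [LinearOrder R] [IsStrictOrderedRing R] [Field F]

theorem hahnSeries_pow_sub_eq_single (p : ℕ) [hp : Fact p.Prime] [CharP F p] {e : ℕ → R}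
    (he : StrictMono e) (hpe : ∀ n, p • e (n + 1) = e n) {ρ : ℕ → F}
    (hρ : ∀ n, ρ (n + 1) ^ p = ρ n) {α : HahnSeries R F}
    (hα : ∀ n, α.coeff (e (n + 1)) = ρ (n + 1))
    (hα₀ : ∀ r ∉ Set.range fun n => e (n + 1), α.coeff r = 0) :
    α ^ p - α = single (e 0) (ρ 0) := by
  have hp₀ : (p : R) ≠ 0 := Nat.cast_ne_zero.2 hp.out.ne_zero
  ext x
  obtain ⟨y, rfl⟩ : ∃ y, p • y = x := ⟨x / p, by rw [nsmul_eq_mul, mul_div_cancel₀ _ hp₀]⟩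
  rw [coeff_sub, hahnSeries_coeff_nsmul_pow_char]
  by_cases hy : y ∈ Set.range fun n => e (n + 1)
  · obtain ⟨n, rfl⟩ := hy
    rw [hα, hpe, hρ]
    cases n with
    | zero =>
      have h₀ : e 0 ∉ Set.range fun n => e (n + 1) := fun ⟨n, hn⟩ =>
        n.succ_ne_zero (he.injective hn)
      rw [hα₀ _ h₀, sub_zero, coeff_single_same]
    | succ n => rw [hα, sub_self, coeff_single_of_ne (he.injective.ne n.succ_ne_zero)]
  · have hpy (n : ℕ) : p • y ≠ e n := fun h =>
      hy ⟨n, smul_right_injective R hp.out.ne_zero ((hpe n).trans h.symm)⟩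
    have hpy' : p • y ∉ Set.range fun n => e (n + 1) := fun ⟨n, hn⟩ => hpy (n + 1) hn.symm
    rw [hα₀ _ hy, hα₀ _ hpy', zero_pow hp.out.ne_zero, sub_zero, coeff_single_of_ne (hpy 0)]

-- The root is `∑ u^(1/pⁿ) t^(-a/pⁿ)` over `n ≥ 1`; its `p`-th power adds exactly the term `n = 0`.
theorem exists_hahnSeries_pow_sub_eq_single (p : ℕ) [hp : Fact p.Prime] [CharP F p]
    [PerfectRing F p] {a : R} (ha : 0 < a) {u : F} (hu : u ≠ 0) :
    ∃ α : HahnSeries R F, α ^ p - α = single (-a) u ∧ α.orderTop < 0 ∧ α.leadingCoeff ^ p = u := by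
  have hp₁ : (1 : R) < p := by exact_mod_cast hp.out.one_lt
  let e : ℕ → R := fun n => -(a / p ^ n)
  let ρ : ℕ → F := fun n => (frobeniusEquiv F p).symm^[n] u
  have he (n : ℕ) : p • e (n + 1) = e n := by
    simp only [e, nsmul_eq_mul, pow_succ]
    field_simp
  have hρ (n : ℕ) : ρ (n + 1) ^ p = ρ n := by
    simp only [ρ, Function.iterate_succ_apply', frobeniusEquiv_symm_pow_p]
  have hemono : StrictMono e := fun m n hmn => neg_lt_neg
    (div_lt_div_of_pos_left ha (by positivity) (pow_lt_pow_right₀ hp₁ hmn))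
  have hshift : StrictMono fun n => e (n + 1) := hemono.comp (strictMono_id.add_const 1)
  obtain ⟨α, hαe, hα₀⟩ := exists_hahnSeries_coeff_eq_of_strictMono hshift fun n => ρ (n + 1)
  have hρ₁ : ρ 1 ≠ 0 := (pow_ne_zero_iff hp.out.ne_zero).1 ((hρ 0).trans_ne hu)
  have horder : α.orderTop = e 1 := by
    refine le_antisymm (orderTop_le_of_coeff_ne_zero ((hαe 0).trans_ne hρ₁))
      (le_orderTop_iff_forall.2 fun r hr => hα₀ r ?_)
    rintro ⟨n, rfl⟩
    exact (hshift.monotone n.zero_le).not_gt (WithTop.coe_lt_coe.1 hr)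
  refine ⟨α, ?_, ?_, ?_⟩
  · simpa [e, ρ] using hahnSeries_pow_sub_eq_single p hemono he hρ hαe hα₀
  · exact horder.trans_lt (WithTop.coe_lt_coe.2 (neg_lt_zero.2 (by positivity)))
  · rw [leadingCoeff, horder, WithTop.recTopCoe_coe, hαe, hρ]
    rfl

end ArtinSchreierRoot

section Transfer

variable {K L E Γ₀ ι : Type*} [Field K] [Field L] [Field E] [LinearOrderedCommGroupWithZero Γ₀]
  [Algebra K L] [Algebra L E] [Algebra K E] [IsScalarTower K L E] [Fintype ι]

theorem ValuationIndependent.comap {w : Valuation E Γ₀} {b : ι → L}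
    (hb : ValuationIndependent K w fun i => algebraMap L E (b i)) :
    ValuationIndependent K (w.comap (algebraMap L E)) b := fun c i => by
  simpa only [Valuation.comap_apply, map_sum, algebraMap.coe_smul, Algebra.smul_def, map_mul,
    ← IsScalarTower.algebraMap_apply] using hb c i

end Transfer

section Minpoly

open Polynomial

theorem minpoly_eq_of_linearIndependent_pow {K L : Type*} [Field K] [Field L] [Algebra K L]
    {P : K[X]} (hP : P.Monic) {x : L} (hx : aeval x P = 0)
    (hlin : LinearIndependent K fun i : Fin P.natDegree => x ^ (i : ℕ)) : minpoly K x = P := by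
  refine (minpoly.unique' K x hP hx fun q hq => ?_).symm
  refine or_iff_not_imp_left.2 fun hq₀ hqx => hq₀ ?_
  have hdeg : q.natDegree < P.natDegree := natDegree_lt_natDegree hq₀ hq
  rw [aeval_eq_sum_range' hdeg, Finset.sum_range] at hqx
  ext n
  rcases lt_or_ge n P.natDegree with hn | hn
  · exact Fintype.linearIndependent_iff.1 hlin (fun i => q.coeff i) hqx ⟨n, hn⟩
  · exact coeff_eq_zero_of_natDegree_lt (hdeg.trans_le hn)

end Minpoly

section RatFuncPow

open Polynomial

theorem ratFunc_pow_ne_X {k : Type*} [Field k] {n : ℕ} (hn : 2 ≤ n) (b : RatFunc k) :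
    b ^ n ≠ RatFunc.X := by
  intro h
  have hX : b ^ n = algebraMap k[X] (RatFunc k) X := h.trans RatFunc.algebraMap_X.symm
  obtain ⟨q, rfl⟩ := IsIntegrallyClosed.exists_algebraMap_eq_of_isIntegral_pow (R := k[X])
    (by lia) (hX ▸ isIntegral_algebraMap)
  rw [← map_pow] at hX
  exact not_irreducible_pow (by lia) (RatFunc.algebraMap_injective k hX ▸ irreducible_X)

end RatFuncPow

section BaseChange

open HahnSeries

theorem hahnSeries_orderTop_map {k F G : Type*} [Field k] [Field F] [LinearOrder G] (φ : k →+* F)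
    (x : HahnSeries G k) : (x.map φ).orderTop = x.orderTop := by
  refine le_antisymm (le_orderTop_iff_forall.2 fun g hg => (map_eq_zero φ).1 ?_)
    (le_orderTop_iff_forall.2 fun g hg => ?_)
  · exact (HahnSeries.map_coeff x φ g).symm.trans (coeff_eq_zero_of_lt_orderTop hg)
  · exact (HahnSeries.map_coeff x φ g).trans
      ((congrArg φ (coeff_eq_zero_of_lt_orderTop hg)).trans (map_zero φ))

variable {k F G : Type*} [Field k] [Field F] [AddCommGroup G] [LinearOrder G]
  [IsOrderedAddMonoid G] (Γ : AddSubgroup G) (φ : k →+* F)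

/-- The embedding `k((t^Γ)) → F((t^G))` given by an embedding of coefficient fields and a subgroup
of exponents. -/
noncomputable def hahnSeriesBaseChange : HahnSeries Γ k →+* HahnSeries G F :=
  (embDomainRingHom Γ.subtype Subtype.val_injective fun _ _ => Iff.rfl).comp
    { toFun := fun x => x.map φ
      map_one' := HahnSeries.map_one φ.toMonoidWithZeroHom
      map_mul' := fun _ _ => HahnSeries.map_mul (φ : k →ₙ+* F)
      map_zero' := HahnSeries.map_zero (φ : ZeroHom k F)
      map_add' := fun _ _ => HahnSeries.map_add (φ : k →+ F) }

theorem hahnSeriesBaseChange_apply (x : HahnSeries Γ k) :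
    hahnSeriesBaseChange Γ φ x = embDomain (OrderEmbedding.subtype (· ∈ Γ)) (x.map φ) :=
  rfl

theorem hahnSeriesBaseChange_single (g : Γ) (u : k) :
    hahnSeriesBaseChange Γ φ (single g u) = single (g : G) (φ u) :=
  (congrArg _ (HahnSeries.map_single (φ : ZeroHom k F))).trans embDomain_single

theorem coeff_hahnSeriesBaseChange_mem_range (x : HahnSeries Γ k) (g : G) :
    (hahnSeriesBaseChange Γ φ x).coeff g ∈ φ.range := by
  rw [hahnSeriesBaseChange_apply]
  by_cases hg : g ∈ Set.range (OrderEmbedding.subtype (· ∈ Γ))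
  · obtain ⟨γ, rfl⟩ := hg
    exact ⟨x.coeff γ, by rw [embDomain_coeff, HahnSeries.map_coeff]⟩
  · rw [embDomain_of_notMem_range hg]
    exact zero_mem _

theorem orderTop_hahnSeriesBaseChange (x : HahnSeries Γ k) :
    (hahnSeriesBaseChange Γ φ x).orderTop = WithTop.map (↑) x.orderTop := by
  rw [hahnSeriesBaseChange_apply, orderTop_embDomain, hahnSeries_orderTop_map]
  rfl

theorem integers_comap_hahnSeriesBaseChange :
    ((addVal G F).toValuation.comap (hahnSeriesBaseChange Γ φ)).Integers
      (hahnValuationSubring Γ k) := by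
  have hiff (x : HahnSeries Γ k) :
      x ∈ hahnValuationSubring Γ k ↔ 0 ≤ (hahnSeriesBaseChange Γ φ x).orderTop := by
    rw [mem_hahnValuationSubring, orderTop_hahnSeriesBaseChange]
    cases x.orderTop with
    | top => simp
    | coe γ => exact WithTop.coe_nonneg.trans (WithTop.coe_nonneg (a := (γ : G))).symm
  exact
    { hom_inj := Subtype.val_injective
      map_le_one := fun x => (hiff x).1 x.2
      exists_of_le_one := fun {x} hx => ⟨⟨x, (hiff x).2 hx⟩, rfl⟩ }

end BaseChange

section Adjoin

open IntermediateField

variable {K E Γ₀ : Type*} [Field K] [Field E] [LinearOrderedCommGroupWithZero Γ₀]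
  [Algebra K E] {p : ℕ} [hp : Fact p.Prime] {c : K} {α : E} {w : Valuation E Γ₀}
  (hind : ValuationIndependent K w fun i : Fin p => α ^ (i : ℕ)) (hgen : 1 < w α)
  (hα : α ^ p - α = algebraMap K E c)

include hind hgen hα

theorem minpoly_eq_artinSchreierPoly_of_valuationIndependent :
    minpoly K α = artinSchreierPoly p c := by
  have hα₀ : α ≠ 0 := (Valuation.ne_zero_iff w).1 (zero_lt_one.trans hgen).ne'
  refine minpoly_eq_of_linearIndependent_pow monic_artinSchreierPoly
    (aeval_artinSchreierPoly_eq_zero_iff.2 hα) ?_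
  rw [natDegree_artinSchreierPoly]
  exact hind.linearIndependent fun i => pow_ne_zero _ hα₀

theorem exists_powerBasis_adjoin_valuationIndependent :
    ∃ pb : PowerBasis K K⟮α⟯, minpoly K pb.gen = artinSchreierPoly p c ∧
      ValuationIndependent K (w.comap (algebraMap K⟮α⟯ E)) pb.basis ∧
      w (algebraMap K⟮α⟯ E pb.gen) = w α := by
  have hmin : minpoly K α = artinSchreierPoly p c :=
    minpoly_eq_artinSchreierPoly_of_valuationIndependent hind hgen hα
  have hint : IsIntegral K α := minpoly.ne_zero_iff.1 (hmin ▸ monic_artinSchreierPoly.ne_zero)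
  have hdim : (minpoly K α).natDegree = p := by rw [hmin, natDegree_artinSchreierPoly]
  refine ⟨adjoin.powerBasis hint, ?_, ValuationIndependent.comap ?_, rfl⟩
  · rw [adjoin.powerBasis_gen, minpoly_gen, hmin]
  · simp only [PowerBasis.basis_eq_pow, map_pow]
    change ValuationIndependent K w fun i : Fin (minpoly K α).natDegree => α ^ (i : ℕ)
    rwa [hdim]

end Adjoin

section AdjoinAssociatedIdeal

open IntermediateField

theorem isGalois_adjoin_and_isAssociatedIdeal_iff {K E : Type} {Γ₀ : Type*} [Field K] [Field E]
    [LinearOrderedCommGroupWithZero Γ₀] [Algebra K E] {p : ℕ} [hp : Fact p.Prime] [CharP K p]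
    {c : K} {α : E} {w : Valuation E Γ₀}
    (hind : ValuationIndependent K w fun i : Fin p => α ^ (i : ℕ)) (hgen : 1 < w α)
    (hα : α ^ p - α = algebraMap K E c) {A : ValuationSubring K}
    (hA : (w.comap (algebraMap K E)).Integers A) {a₀ : A} (ha₀ : (a₀ : K) = c⁻¹) :
    IsGalois K K⟮α⟯ ∧ FiniteDimensional K K⟮α⟯ ∧ Nat.card (K⟮α⟯ ≃ₐ[K] K⟮α⟯) = p ∧
      ∀ H, IsAssociatedIdeal A K⟮α⟯ H ↔ H = Ideal.span {a₀} := by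
  obtain ⟨pb, hmin, hindpb, hgenpb⟩ := exists_powerBasis_adjoin_valuationIndependent hind hgen hα
  exact ⟨isGalois_of_minpoly_eq_artinSchreierPoly hmin, pb.finite,
    card_algEquiv_of_minpoly_eq_artinSchreierPoly hmin, fun H =>
    isAssociatedIdeal_iff_eq_span_inv (w := w.comap (algebraMap K⟮α⟯ E)) hA hmin hindpb
      (hgen.trans_eq hgenpb.symm) ha₀⟩

end AdjoinAssociatedIdeal

section HahnExtension

open HahnSeries

variable {R k : Type} [Field R] [LinearOrder R] [IsStrictOrderedRing R] [Field k] {p : ℕ}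
  [hp : Fact p.Prime] [CharP k p] {Γ : AddSubgroup R}

theorem exists_galois_extension_isAssociatedIdeal_iff {u : k} (hu : ∀ b : k, b ^ p ≠ u) {g : Γ}
    (hg : 0 < g) :
    ∃ a₀ : hahnValuationSubring Γ k, (a₀ : HahnSeries Γ k).orderTop = g ∧
      ∃ (L : Type) (_ : Field L) (_ : Algebra (HahnSeries Γ k) L),
        IsGalois (HahnSeries Γ k) L ∧ FiniteDimensional (HahnSeries Γ k) L ∧
        Nat.card (L ≃ₐ[HahnSeries Γ k] L) = p ∧
        ∀ H, IsAssociatedIdeal (hahnValuationSubring Γ k) L H ↔ H = Ideal.span {a₀} := by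
  have hu₀ : u ≠ 0 := fun h => hu 0 (by rw [h, zero_pow hp.out.ne_zero])
  let c : HahnSeries Γ k := single (-g) u
  have hc : c⁻¹.orderTop = g := by
    rw [inv_single, neg_neg, orderTop_single (inv_ne_zero hu₀)]
  have hc₀ : c⁻¹ ∈ hahnValuationSubring Γ k :=
    mem_hahnValuationSubring.2 (hc ▸ WithTop.coe_le_coe.2 hg.le)
  refine ⟨⟨c⁻¹, hc₀⟩, hc, ?_⟩
  let F := AlgebraicClosure k
  have : CharP F p := charP_of_injective_algebraMap (algebraMap k F).injective p
  have : CharP (HahnSeries Γ k) p :=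
    charP_of_injective_ringHom (f := (C : k →+* HahnSeries Γ k)) C_injective p
  let _ : Algebra (HahnSeries Γ k) (HahnSeries R F) :=
    (hahnSeriesBaseChange Γ (algebraMap k F)).toAlgebra
  obtain ⟨α, hα, hαtop, hαlead⟩ := exists_hahnSeries_pow_sub_eq_single p (a := (g : R)) hg
    ((map_ne_zero (algebraMap k F)).2 hu₀)
  have hαc : α ^ p - α = algebraMap (HahnSeries Γ k) (HahnSeries R F) c :=
    hα.trans (hahnSeriesBaseChange_single Γ (algebraMap k F) (-g) u).symm
  have hind : ValuationIndependent (HahnSeries Γ k) (addVal R F).toValuation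
      fun i : Fin p => α ^ (i : ℕ) :=
    valuationIndependent_pow_of_leadingCoeff_pow_eq
      (coeff_hahnSeriesBaseChange_mem_range Γ (algebraMap k F)) hp.out hu hαlead
  exact ⟨_, _, _, isGalois_adjoin_and_isAssociatedIdeal_iff hind hαtop hαc
    (integers_comap_hahnSeriesBaseChange Γ (algebraMap k F)) rfl⟩

end HahnExtension

section OrderValueSet

open HahnSeries

variable {G k : Type*} [AddCommGroup G] [LinearOrder G] [IsOrderedAddMonoid G] [Field k]

theorem exists_units_hahnSeries_order_eq (g : G) :
    ∃ x : (HahnSeries G k)ˣ, (x : HahnSeries G k).order = g :=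
  ⟨Units.mk0 (single g 1) (single_ne_zero one_ne_zero), order_single one_ne_zero⟩

theorem mem_span_singleton_iff_le_order {a₀ h : hahnValuationSubring G k} {g : G}
    (ha₀ : (a₀ : HahnSeries G k).orderTop = g) (hh : (h : HahnSeries G k) ≠ 0) :
    h ∈ Ideal.span {a₀} ↔ g ≤ (h : HahnSeries G k).order := by
  rw [mem_span_singleton_iff_le_addValuation (addVal G k) fun _ => Iff.rfl, addVal_apply,
    addVal_apply, ha₀, ← order_eq_orderTop_of_ne_zero hh, WithTop.coe_le_coe]

theorem setOf_order_mem_span_singleton_eq {Γ : AddSubgroup G} {a₀ : hahnValuationSubring Γ k}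
    {g : Γ} (ha₀ : (a₀ : HahnSeries Γ k).orderTop = g) :
    {r : G | ∃ h ∈ Ideal.span {a₀}, ∃ x : (HahnSeries Γ k)ˣ,
      (x : HahnSeries Γ k) = h ∧ ((x : HahnSeries Γ k).order : G) = r} =
        {r : G | r ∈ Γ ∧ g ≤ r} := by
  ext r
  constructor
  · rintro ⟨h, hh, x, hx, rfl⟩
    rw [mem_span_singleton_iff_le_order ha₀ (hx ▸ x.ne_zero), ← hx] at hh
    exact ⟨Subtype.prop _, hh⟩
  · rintro ⟨hr, hgr⟩
    obtain ⟨x, hx⟩ := exists_units_hahnSeries_order_eq (k := k) (⟨r, hr⟩ : Γ)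
    have hg : 0 ≤ g := WithTop.coe_le_coe.1 (ha₀ ▸ mem_hahnValuationSubring.1 a₀.2)
    have hgx : g ≤ (x : HahnSeries Γ k).order := hx ▸ hgr
    exact ⟨⟨x, zero_le_orderTop_iff.2 (hg.trans hgx)⟩,
      (mem_span_singleton_iff_le_order ha₀ x.ne_zero).2 hgx, x, rfl, congrArg Subtype.val hx⟩

end OrderValueSet

open HahnSeries in
theorem exists_assoc_ideal_value_set_eq_Ici_general
    (p : ℕ) (hp : p.Prime) (Γ : AddSubgroup ℝ) (a : ℝ) (haΓ : a ∈ Γ) (hapos : 0 < a) :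
    ∃ (K : Type) (_ : Field K) (_ : CharP K p) (A : ValuationSubring K)
      (_ : HenselianLocalRing ↥A) (v : Kˣ → ℝ),
      (∀ x y : Kˣ, v (x * y) = v x + v y) ∧
      (∀ x y z : Kˣ, (x : K) + (y : K) = (z : K) → min (v x) (v y) ≤ v z) ∧
      Set.range v = (Γ : Set ℝ) ∧
      (∀ x : Kˣ, ((x : K) ∈ A ↔ 0 ≤ v x)) ∧
      ∃ (L : Type) (_ : Field L) (_ : Algebra K L),
        IsGalois K L ∧ FiniteDimensional K L ∧ IsCyclic (L ≃ₐ[K] L) ∧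
        Nat.card (L ≃ₐ[K] L) = p ∧
        ∀ H : Ideal ↥A, IsAssociatedIdeal A L H →
          {r : ℝ | ∃ h ∈ H, ∃ x : Kˣ, (x : K) = ((h : ↥A) : K) ∧ v x = r} =
            {r : ℝ | r ∈ Γ ∧ a ≤ r} := by
  have : Fact p.Prime := ⟨hp⟩
  let k := RatFunc (ZMod p)
  have : CharP k p := charP_of_injective_algebraMap (algebraMap (ZMod p) k).injective p
  have hK : CharP (HahnSeries Γ k) p :=
    charP_of_injective_ringHom (f := (C : k →+* HahnSeries Γ k)) C_injective p
  obtain ⟨a₀, ha₀, L, _, _, hGal, hfin, hcard, hassoc⟩ :=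
    exists_galois_extension_isAssociatedIdeal_iff (ratFunc_pow_ne_X (k := ZMod p) hp.two_le)
      (g := (⟨a, haΓ⟩ : Γ)) hapos
  refine ⟨HahnSeries Γ k, inferInstance, hK, hahnValuationSubring Γ k, inferInstance,
    fun x => ((x : HahnSeries Γ k).order : ℝ), fun x y => ?_, fun x y z hxyz => ?_, ?_,
    fun x => zero_le_orderTop_iff, L, _, _, hGal, hfin, isCyclic_of_prime_card hcard, hcard,
    fun H hH => ?_⟩
  · exact congrArg Subtype.val (order_mul x.ne_zero y.ne_zero)
  · have hmin := min_order_le_order_add (hxyz ▸ z.ne_zero)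
    rw [hxyz] at hmin
    exact_mod_cast hmin
  · refine Set.Subset.antisymm (Set.range_subset_iff.2 fun x => Subtype.prop _) fun r hr => ?_
    obtain ⟨x, hx⟩ := exists_units_hahnSeries_order_eq (k := k) (⟨r, hr⟩ : Γ)
    exact ⟨x, congrArg Subtype.val hx⟩
  · rw [(hassoc H).1 hH]
    exact setOf_order_mem_span_singleton_eq ha₀

/-- Let `p` be a prime, `Γ` a nonzero subgroup of `ℝ` not isomorphic to `ℤ`, and `a ∈ Γ`,
`a > 0`.  Then there are a field `K` of characteristic `p`, a Henselian valuation ring `A`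
with fraction field `K`, a valuation `v : Kˣ → ℝ` with image `Γ` and
`A = {0} ∪ {x : v(x) ≥ 0}`, and a cyclic Galois extension `L/K` of degree `p` such that
`{v(x) : x ∈ H, x ≠ 0} = {γ ∈ Γ : γ ≥ a}`, where `H` is the ideal of `A` associated
to `L/K`. -/
theorem exists_assoc_ideal_value_set_eq_Ici
    (p : ℕ) (hp : p.Prime) (Γ : AddSubgroup ℝ) (hΓ : Γ ≠ ⊥)
    (hΓZ : ¬Nonempty (↥Γ ≃+ ℤ)) (a : ℝ) (haΓ : a ∈ Γ) (hapos : 0 < a) :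
    ∃ (K : Type) (_ : Field K) (_ : CharP K p) (A : ValuationSubring K)
      (_ : HenselianLocalRing ↥A) (v : Kˣ → ℝ),
      (∀ x y : Kˣ, v (x * y) = v x + v y) ∧
      (∀ x y z : Kˣ, (x : K) + (y : K) = (z : K) → min (v x) (v y) ≤ v z) ∧
      Set.range v = (Γ : Set ℝ) ∧
      (∀ x : Kˣ, ((x : K) ∈ A ↔ 0 ≤ v x)) ∧
      ∃ (L : Type) (_ : Field L) (_ : Algebra K L),
        IsGalois K L ∧ FiniteDimensional K L ∧ IsCyclic (L ≃ₐ[K] L) ∧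
        Nat.card (L ≃ₐ[K] L) = p ∧
        ∀ H : Ideal ↥A, IsAssociatedIdeal A L H →
          {r : ℝ | ∃ h ∈ H, ∃ x : Kˣ, (x : K) = ((h : ↥A) : K) ∧ v x = r} =
            {r : ℝ | r ∈ Γ ∧ a ≤ r} :=
  exists_assoc_ideal_value_set_eq_Ici_general p hp Γ a haΓ hapos
end

section
/- Let p be a prime number, let Γ be a nonzero subgroup of the additive group ℝ which is not isomorphic to ℤ, and let a be a positive real number. Then there exist a field K of characteristic p, a Henselian valuation ring A with field of fractions K, a surjective valuation v : Kˣ → Γ (i.e. v(xy) = v(x) + v(y) and v(x + y) ≥ min(v(x), v(y)) whenever defined) with A = {0} ∪ {x ∈ Kˣ : v(x) ≥ 0}, and a cyclic Galois extension L/K of degree p, such that {v(x) : x ∈ H, x ≠ 0} = {γ ∈ Γ : γ > a}, where H is the ideal of A associated to L/K. -/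
set_option synthInstance.maxHeartbeats 400000

/-!
Let `F` be the field of Hahn series over `ZMod p` with exponents in `Γ`, normed by
`x ↦ exp (- order x)`, and let `δ = exp (- a / p)`. Take one variable `X_c` for every `c : F` of
norm `< δ`. The translation `X_c ↦ X_c + c` of the polynomial ring over `F` has order `p`, and
for the Gauss norm it moves every nonzero element by a relative distance `< δ`. This strict bound
passes to quotients and to the completion `L` of the field of fractions, while the `X_c` show that
`δ` is the supremum of the relative displacements, because `Γ` is dense in `ℝ`. The fixed field `K`
of the resulting automorphism is complete, so its unit ball is Henselian, and its value group is
that of `F`. The ideal `J_σ` consists of the elements of norm `< δ`, and `Gal(L/K)` acts by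
isometries, so that the norm from `L` to `K` raises absolute values to the power `p`: the
associated ideal consists of the elements of norm `< δ ^ p = exp (- a)`.
-/

open scoped NNReal

universe u

section Displacement

variable {Γ₀ : Type*} [LinearOrderedCommGroupWithZero Γ₀] {δ : Γ₀}

section Ring

variable {R S : Type*} [CommRing R] [FunLike S R R] {w : Valuation R Γ₀} {s : S} {x y : R}

theorem map_eq_of_map_sub_lt_mul (hδ : δ ≤ 1) (hx : w (s x - x) < δ * w x) : w (s x) = w x :=
  w.map_eq_of_sub_lt (hx.trans_le (mul_le_of_le_one_left' hδ))

theorem map_eq_of_forall_map_sub_lt_mul [ZeroHomClass S R R] (hδ : δ ≤ 1)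
    (h : ∀ x ≠ 0, w (s x - x) < δ * w x) (x : R) : w (s x) = w x := by
  rcases eq_or_ne x 0 with rfl | hx
  · rw [map_zero]
  · exact map_eq_of_map_sub_lt_mul hδ (h x hx)

theorem map_sub_lt_mul_of_mul [RingHomClass S R R] (hδ : δ ≤ 1) (hx : w (s x - x) < δ * w x)
    (hy : w (s y - y) < δ * w y) : w (s (x * y) - x * y) < δ * w (x * y) := by
  have hx0 : 0 < w x := pos_of_mul_pos_right (zero_le.trans_lt hx) zero_le
  have hy0 : 0 < w y := pos_of_mul_pos_right (zero_le.trans_lt hy) zero_le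
  have hsplit : s (x * y) - x * y = s x * (s y - y) + (s x - x) * y := by rw [map_mul]; ring
  rw [hsplit, w.map_mul x y]
  refine w.map_add_lt ?_ ?_
  · rw [w.map_mul, map_eq_of_map_sub_lt_mul hδ hx, mul_left_comm]
    gcongr
  · rw [w.map_mul, ← mul_assoc]
    gcongr

end Ring

section Field

variable {K S : Type*} [Field K] [FunLike S K K] [RingHomClass S K K] {w : Valuation K Γ₀}
  {s : S} {x : K}

theorem map_sub_lt_mul_of_inv (hδ : δ ≤ 1) (hx : w (s x - x) < δ * w x) :
    w (s x⁻¹ - x⁻¹) < δ * w x⁻¹ := by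
  have hwx : 0 < w x := pos_of_mul_pos_right (zero_le.trans_lt hx) zero_le
  have hx0 : x ≠ 0 := w.pos_iff.1 hwx
  have hsx0 : s x ≠ 0 := (map_ne_zero s).2 hx0
  have hsplit : s x⁻¹ - x⁻¹ = -(s x - x) * (s x * x)⁻¹ := by rw [map_inv₀]; field_simp; ring
  calc w (s x⁻¹ - x⁻¹)
      = w (s x - x) * (w x * w x)⁻¹ := by
        rw [hsplit, w.map_mul, w.map_neg, map_inv₀, w.map_mul, map_eq_of_map_sub_lt_mul hδ hx]
    _ < δ * w x * (w x * w x)⁻¹ := by gcongr; exact inv_pos.2 (mul_pos hwx hwx)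
    _ = δ * w x⁻¹ := by rw [map_inv₀, mul_inv, mul_assoc, mul_inv_cancel_left₀ hwx.ne']

theorem map_sub_lt_mul_of_isFractionRing {R : Type*} [CommRing R]
    [Algebra R K] [IsFractionRing R K] (hδ : δ ≤ 1)
    (h : ∀ f : R, f ≠ 0 → w (s (algebraMap R K f) - algebraMap R K f) < δ * w (algebraMap R K f))
    (hx : x ≠ 0) : w (s x - x) < δ * w x := by
  have : Nontrivial R := (algebraMap R K).domain_nontrivial
  obtain ⟨f, g, hg, rfl⟩ := IsFractionRing.div_surjective (A := R) x
  have hf : f ≠ 0 := by rintro rfl; simp at hx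
  rw [div_eq_mul_inv]
  exact map_sub_lt_mul_of_mul hδ (h f hf)
    (map_sub_lt_mul_of_inv hδ (h g (nonZeroDivisors.ne_zero hg)))

end Field

end Displacement

section Gauss

open MvPolynomial

variable {ι R Γ₀ : Type*} [CommRing R] [LinearOrderedCommGroupWithZero Γ₀]

/-- The largest value of a coefficient of a polynomial; it is the underlying function of
`gaussValuation`. -/
def maxCoeffValue (v : Valuation R Γ₀) (f : MvPolynomial ι R) : Γ₀ :=
  f.support.sup fun m => v (f.coeff m)

theorem le_maxCoeffValue (v : Valuation R Γ₀) (f : MvPolynomial ι R) (m : ι →₀ ℕ) :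
    v (f.coeff m) ≤ maxCoeffValue v f := by
  by_cases hm : m ∈ f.support
  · exact Finset.le_sup (f := fun m => v (f.coeff m)) hm
  · simp [notMem_support_iff.1 hm]

theorem maxCoeffValue_le {v : Valuation R Γ₀} {f : MvPolynomial ι R} {c : Γ₀}
    (h : ∀ m, v (f.coeff m) ≤ c) : maxCoeffValue v f ≤ c :=
  Finset.sup_le fun m _ => h m

theorem exists_coeff_eq_maxCoeffValue (v : Valuation R Γ₀) (f : MvPolynomial ι R) :
    ∃ m, v (f.coeff m) = maxCoeffValue v f := by
  rcases f.support.eq_empty_or_nonempty with hf | hf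
  · exact ⟨0, by simp [maxCoeffValue, support_eq_empty.1 hf, bot_eq_zero]⟩
  · obtain ⟨m, -, hm⟩ := Finset.exists_mem_eq_sup _ hf fun m => v (f.coeff m)
    exact ⟨m, hm.symm⟩

-- A sum `m + n` of dominant exponents that arises only once gives a coefficient of `f * g` in which
-- the leading term cannot cancel.
theorem exists_uniqueAdd_dominant {v : Valuation R Γ₀} {f g : MvPolynomial ι R}
    (hf : maxCoeffValue v f ≠ 0) (hg : maxCoeffValue v g ≠ 0) :
    ∃ m n, v (f.coeff m) = maxCoeffValue v f ∧ v (g.coeff n) = maxCoeffValue v g ∧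
      ∀ m' n', m' + n' = m + n → (m', n') ≠ (m, n) →
        v (f.coeff m' * g.coeff n') < maxCoeffValue v f * maxCoeffValue v g := by
  classical
  let dominant (f : MvPolynomial ι R) : Finset (ι →₀ ℕ) :=
    {m ∈ f.support | v (f.coeff m) = maxCoeffValue v f}
  have mem_dominant {f : MvPolynomial ι R} (hf : maxCoeffValue v f ≠ 0) (m) :
      m ∈ dominant f ↔ v (f.coeff m) = maxCoeffValue v f := by
    simp only [dominant, Finset.mem_filter, mem_support_iff, and_iff_right_iff_imp]
    rintro hm h0
    exact hf (by rw [← hm, h0, v.map_zero])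
  have nonempty {f : MvPolynomial ι R} (hf : maxCoeffValue v f ≠ 0) : (dominant f).Nonempty :=
    let ⟨m, hm⟩ := exists_coeff_eq_maxCoeffValue v f
    ⟨m, (mem_dominant hf m).2 hm⟩
  obtain ⟨m, hm, n, hn, huniq⟩ := UniqueSums.uniqueAdd_of_nonempty (nonempty hf) (nonempty hg)
  refine ⟨m, n, (mem_dominant hf m).1 hm, (mem_dominant hg n).1 hn, fun m' n' hadd hne => ?_⟩
  rw [v.map_mul]
  by_cases hm' : m' ∈ dominant f
  · have hn' : n' ∉ dominant g := fun hn' => hne (Prod.ext_iff.2 (huniq hm' hn' hadd))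
    exact mul_lt_mul_of_le_of_lt_of_nonneg_of_pos (le_maxCoeffValue v f m')
      ((le_maxCoeffValue v g n').lt_of_ne (mt (mem_dominant hg n').2 hn')) zero_le
      (zero_lt_iff.2 hf)
  · exact mul_lt_mul_of_lt_of_le_of_nonneg_of_pos
      ((le_maxCoeffValue v f m').lt_of_ne (mt (mem_dominant hf m').2 hm'))
      (le_maxCoeffValue v g n') zero_le (zero_lt_iff.2 hg)

theorem maxCoeffValue_mul (v : Valuation R Γ₀) (f g : MvPolynomial ι R) :
    maxCoeffValue v (f * g) = maxCoeffValue v f * maxCoeffValue v g := by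
  classical
  refine le_antisymm (maxCoeffValue_le fun m => ?_) ?_
  · rw [coeff_mul]
    refine v.map_sum_le fun mn _ => ?_
    rw [v.map_mul]
    exact mul_le_mul' (le_maxCoeffValue v f mn.1) (le_maxCoeffValue v g mn.2)
  · by_cases hf : maxCoeffValue v f = 0
    · simp [hf]
    by_cases hg : maxCoeffValue v g = 0
    · simp [hg]
    obtain ⟨m, n, hm, hn, hdom⟩ := exists_uniqueAdd_dominant hf hg
    calc maxCoeffValue v f * maxCoeffValue v g
        = v ((f * g).coeff (m + n)) := by
          rw [coeff_mul, v.map_sum_eq_of_lt (j := (m, n))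
            (Finset.HasAntidiagonal.mem_antidiagonal.2 rfl)]
          · rw [v.map_mul, hm, hn]
          · intro mn hmn
            rw [Finset.mem_sdiff, Finset.HasAntidiagonal.mem_antidiagonal,
              Finset.mem_singleton] at hmn
            rw [v.map_mul (f.coeff m), hm, hn]
            exact hdom mn.1 mn.2 hmn.1 hmn.2
      _ ≤ maxCoeffValue v (f * g) := le_maxCoeffValue v _ _

/-- The Gauss valuation on polynomials, extending `v` with every variable of value `1`. -/
def gaussValuation (ι : Type*) (v : Valuation R Γ₀) : Valuation (MvPolynomial ι R) Γ₀ where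
  toFun := maxCoeffValue v
  map_zero' := by simp [maxCoeffValue, bot_eq_zero]
  map_one' := by
    classical
    obtain ⟨m, hm⟩ := exists_coeff_eq_maxCoeffValue v (1 : MvPolynomial ι R)
    refine le_antisymm ?_ (by simpa using le_maxCoeffValue v (1 : MvPolynomial ι R) 0)
    rw [← hm, coeff_one]
    split_ifs <;> simp
  map_mul' := maxCoeffValue_mul v
  map_add_le_max' f g := maxCoeffValue_le fun m => by
    rw [coeff_add]
    exact (v.map_add _ _).trans (max_le_max (le_maxCoeffValue v f m) (le_maxCoeffValue v g m))

theorem le_gaussValuation (v : Valuation R Γ₀) (f : MvPolynomial ι R) (m : ι →₀ ℕ) :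
    v (f.coeff m) ≤ gaussValuation ι v f :=
  le_maxCoeffValue v f m

theorem exists_gaussValuation_eq (v : Valuation R Γ₀) (f : MvPolynomial ι R) :
    ∃ c, gaussValuation ι v f = v c :=
  let ⟨m, hm⟩ := exists_coeff_eq_maxCoeffValue v f
  ⟨f.coeff m, hm.symm⟩

theorem gaussValuation_monomial (v : Valuation R Γ₀) (m : ι →₀ ℕ) (c : R) :
    gaussValuation ι v (monomial m c) = v c := by
  classical
  refine le_antisymm (maxCoeffValue_le fun n => ?_)
    (by simpa using le_gaussValuation v (monomial m c) m)
  rw [coeff_monomial]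
  split_ifs <;> simp

theorem gaussValuation_C (v : Valuation R Γ₀) (c : R) : gaussValuation ι v (C c) = v c :=
  gaussValuation_monomial v 0 c

theorem gaussValuation_X (v : Valuation R Γ₀) (i : ι) : gaussValuation ι v (X i) = 1 := by
  rw [X, gaussValuation_monomial, v.map_one]

theorem gaussValuation_ne_zero {F : Type*} [Field F] (v : Valuation F Γ₀)
    {f : MvPolynomial ι F} (hf : f ≠ 0) : gaussValuation ι v f ≠ 0 := by
  obtain ⟨m, hm⟩ := ne_zero_iff.1 hf
  exact ((zero_lt_iff.2 (v.ne_zero_iff.2 hm)).trans_le (le_gaussValuation v f m)).ne'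

end Gauss

section Translation

open MvPolynomial

theorem gaussValuation_map_sub_lt_mul {ι F Γ₀ : Type*} [Field F]
    [LinearOrderedCommGroupWithZero Γ₀] {v : Valuation F Γ₀} {δ : Γ₀} (hδ : δ ≤ 1) (hδ0 : 0 < δ)
    (s : MvPolynomial ι F →ₐ[F] MvPolynomial ι F)
    (hs : ∀ i, gaussValuation ι v (s (X i) - X i) < δ) {f : MvPolynomial ι F} (hf : f ≠ 0) :
    gaussValuation ι v (s f - f) < δ * gaussValuation ι v f := by
  have hpos {f : MvPolynomial ι F} (hf : f ≠ 0) : 0 < δ * gaussValuation ι v f :=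
    mul_pos hδ0 (zero_lt_iff.2 (gaussValuation_ne_zero v hf))
  have monomial_lt (m : ι →₀ ℕ) {c : F} (hc : c ≠ 0) :
      gaussValuation ι v (s (monomial m c) - monomial m c) <
        δ * gaussValuation ι v (monomial m c) := by
    refine induction_on_monomial (motive := fun f => f ≠ 0 →
      gaussValuation ι v (s f - f) < δ * gaussValuation ι v f) (fun c hc => ?_)
      (fun f i ih hf => ?_) m c (by simpa using hc)
    · rw [← algebraMap_eq, s.commutes, sub_self, map_zero]
      exact hpos hc
    · refine map_sub_lt_mul_of_mul hδ (ih (left_ne_zero_of_mul hf)) ?_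
      simpa only [gaussValuation_X, mul_one] using hs i
  have hsum : s f - f = ∑ m ∈ f.support, (s (monomial m (f.coeff m)) - monomial m (f.coeff m)) := by
    rw [Finset.sum_sub_distrib, ← map_sum, support_sum_monomial_coeff]
  rw [hsum]
  refine Valuation.map_sum_lt _ (hpos hf).ne' fun m hm =>
    (monomial_lt m (mem_support_iff.1 hm)).trans_le ?_
  rw [gaussValuation_monomial]
  exact mul_le_mul_right (le_gaussValuation v f m) δ

variable (ι R : Type*) [CommRing R]

/-- The additive group of `ι → R` acting on polynomials by the translations
`X i ↦ X i + c i`. -/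
noncomputable def translation :
    Multiplicative (ι → R) →* (MvPolynomial ι R ≃ₐ[R] MvPolynomial ι R) :=
  (AlgEquiv.algHomUnitsEquiv R (MvPolynomial ι R)).toMonoidHom.comp <| MonoidHom.toHomUnits
    { toFun := fun c => aeval fun i => X i + C (c.toAdd i)
      map_one' := by ext i; simp
      map_mul' := fun c d => by ext i; simp [add_assoc, add_comm] }

variable {ι R}

theorem translation_X (c : ι → R) (i : ι) :
    translation ι R (.ofAdd c) (X i) = X i + C (c i) := by
  simp [translation]

theorem translation_pow_eq_one (p : ℕ) [CharP R p] (c : ι → R) :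
    translation ι R (.ofAdd c) ^ p = 1 := by
  have hpc : p • c = 0 := by ext i; simp [nsmul_eq_mul]
  rw [← map_pow, ← ofAdd_nsmul, hpc, ofAdd_zero, map_one]

end Translation

section FractionField

open MvPolynomial

theorem exists_valued_algEquiv {F : Type u} [Field F] {p : ℕ} [CharP F p]
    (v : Valuation F ℝ≥0) {δ : ℝ≥0} (hδ : δ ≤ 1) (hδ0 : 0 < δ) :
    ∃ (E : Type u) (_ : Field E) (_ : Algebra F E) (w : Valuation E ℝ≥0) (s : E ≃ₐ[F] E),
      (∀ c, w (algebraMap F E c) = v c) ∧ (∀ x, ∃ c, w x = v c) ∧ s ^ p = 1 ∧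
      (∀ x ≠ 0, w (s x - x) < δ * w x) ∧ ∀ c, v c < δ → ∃ x, w x = 1 ∧ w (s x - x) = v c := by
  let ι := {c : F // v c < δ}
  let P := MvPolynomial ι F
  let c : ι → F := Subtype.val
  have hP : nonZeroDivisors P ≤ (gaussValuation ι v).supp.primeCompl := fun f hf =>
    gaussValuation_ne_zero v (nonZeroDivisors.ne_zero hf)
  let w := (gaussValuation ι v).extendToLocalization hP (FractionRing P)
  have hw (f : P) : w (algebraMap P _ f) = gaussValuation ι v f :=
    Valuation.extendToLocalization_apply_map_apply _ _ _ f
  let s := IsFractionRing.fieldEquivOfAlgEquivHom F (FractionRing P) (translation ι F (.ofAdd c))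
  have hs (f : P) : s (algebraMap P _ f) = algebraMap P _ (translation ι F (.ofAdd c) f) :=
    IsFractionRing.fieldEquivOfAlgEquiv_algebraMap ..
  have hX (i : ι) : translation ι F (.ofAdd c) (X i) - X i = C (c i) := by
    rw [translation_X, add_sub_cancel_left]
  refine ⟨FractionRing P, inferInstance, inferInstance, w, s, fun c => ?_, fun x => ?_, ?_,
    fun x hx => ?_, fun c hc => ?_⟩
  · rw [IsScalarTower.algebraMap_apply F P, hw, algebraMap_eq, gaussValuation_C]
  · obtain ⟨f, g, -, rfl⟩ := IsFractionRing.div_surjective (A := P) x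
    obtain ⟨c, hc⟩ := exists_gaussValuation_eq v f
    obtain ⟨d, hd⟩ := exists_gaussValuation_eq v g
    exact ⟨c / d, by rw [map_div₀, map_div₀, hw, hw, hc, hd]⟩
  · rw [← map_pow, translation_pow_eq_one, map_one]
  · refine map_sub_lt_mul_of_isFractionRing (R := P) hδ (fun f hf => ?_) hx
    rw [hs, ← map_sub, hw, hw]
    refine gaussValuation_map_sub_lt_mul hδ hδ0 (translation ι F (.ofAdd c)).toAlgHom
      (fun i => ?_) hf
    simpa [hX, gaussValuation_C] using i.2
  · refine ⟨algebraMap P _ (X ⟨c, hc⟩), by rw [hw, gaussValuation_X], ?_⟩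
    rw [hs, ← map_sub, hw, hX, gaussValuation_C]

end FractionField

section Completion

open UniformSpace

theorem isUltrametricDist_completion (E : Type*) [NormedField E] [IsUltrametricDist E] :
    IsUltrametricDist (Completion E) := by
  refine IsUltrametricDist.isUltrametricDist_of_isNonarchimedean_norm fun x y => ?_
  induction x, y using Completion.induction_on₂ with
  | hp => exact isClosed_le (by fun_prop) (by fun_prop)
  | ih x y =>
    rw [← Completion.coe_add]
    simpa only [Completion.norm_coe] using IsUltrametricDist.norm_add_le_max x y

theorem exists_complete_extension {E : Type u} [Field E] (w : Valuation E ℝ≥0) (s : E ≃+* E)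
    (hs : ∀ x, w (s x) = w x) :
    ∃ (L : Type u) (_ : NormedField L) (_ : CompleteSpace L) (_ : IsUltrametricDist L)
      (i : E →+* L) (σ : L ≃+* L),
      DenseRange i ∧ (∀ x, ‖i x‖₊ = w x) ∧ Isometry σ ∧ ∀ x, σ (i x) = i (s x) := by
  let : NormedField E := AbsoluteValue.toNormedField
    { toFun := fun x => w x
      map_mul' := by simp
      nonneg' := fun x => NNReal.coe_nonneg _
      eq_zero' := by simp
      add_le' := fun x y => by
        exact_mod_cast (w.map_add x y).trans (max_le_add_of_nonneg zero_le zero_le) }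
  have norm_eq (x : E) : ‖x‖ = w x := rfl
  have : IsUltrametricDist E :=
    IsUltrametricDist.isUltrametricDist_of_isNonarchimedean_norm fun x y => by
      exact_mod_cast w.map_add x y
  have hsi : Isometry s := AddMonoidHomClass.isometry_of_norm s fun x => by
    rw [norm_eq, norm_eq, hs]
  have hsi' : Isometry s.symm := hsi.right_inv s.apply_symm_apply
  exact ⟨Completion E, inferInstance, inferInstance, isUltrametricDist_completion E,
    Completion.coeRingHom, Completion.mapRingEquiv s hsi.continuous hsi'.continuous,
    Completion.denseRange_coe, fun x => NNReal.eq (Completion.norm_coe x), hsi.completion_map,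
    Completion.mapRingHom_coe hsi.continuous⟩

end Completion

section DenseRange

variable {E L : Type*} [Field E] [NormedField L] {i : E →+* L} {σ : L ≃+* L} {s : E ≃+* E}

theorem exists_nnnorm_eq_of_denseRange [IsUltrametricDist L] (hi : DenseRange i) {δ : ℝ≥0}
    (hδ : 0 < δ) (hδ1 : δ ≤ 1) {y : L} (hy : y ≠ 0) :
    ∃ x, ‖y - i x‖₊ < δ * ‖y‖₊ ∧ ‖i x‖₊ = ‖y‖₊ := by
  have hpos : 0 < δ * ‖y‖₊ := mul_pos hδ (nnnorm_pos.2 hy)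
  obtain ⟨x, hx⟩ := hi.exists_dist_lt y (NNReal.coe_pos.2 hpos)
  rw [dist_eq_norm] at hx
  have hx' : ‖i x - y‖₊ < δ * ‖y‖₊ := by rw [← nnnorm_neg, neg_sub]; exact_mod_cast hx
  refine ⟨x, by exact_mod_cast hx, NormedField.valuation.map_eq_of_sub_lt (hx'.trans_le ?_)⟩
  exact mul_le_of_le_one_left' hδ1

theorem nnnorm_map_sub_lt_mul_of_denseRange [IsUltrametricDist L] (hi : DenseRange i)
    (hσ : Isometry σ) (hs : ∀ x, σ (i x) = i (s x)) {δ : ℝ≥0} (hδ : δ ≤ 1) (hδ0 : 0 < δ)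
    (h : ∀ x ≠ 0, ‖i (s x - x)‖₊ < δ * ‖i x‖₊) {y : L} (hy : y ≠ 0) :
    ‖σ y - y‖₊ < δ * ‖y‖₊ := by
  obtain ⟨x, hxy, hx⟩ := exists_nnnorm_eq_of_denseRange hi hδ0 hδ hy
  have hx0 : x ≠ 0 := by
    rintro rfl
    simp [eq_comm, hy] at hx
  have hsplit : σ y - y = σ (y - i x) + (i (s x - x) - (y - i x)) := by
    rw [map_sub σ, map_sub i, hs]; ring
  have hσxy : ‖σ (y - i x)‖₊ = ‖y - i x‖₊ :=
    hσ.nnnorm_map_of_map_zero (map_zero σ) _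
  rw [hsplit]
  let v : Valuation L ℝ≥0 := NormedField.valuation
  exact v.map_add_lt (hσxy.trans_lt hxy) (v.map_sub_lt (hx ▸ h x hx0) hxy)

theorem pow_eq_one_of_denseRange (hi : DenseRange i) (hσ : Continuous σ)
    (hs : ∀ x, σ (i x) = i (s x)) {n : ℕ} (hn : s ^ n = 1) : σ ^ n = 1 := by
  have hsemi : Function.Semiconj i s^[n] σ^[n] :=
    Function.Semiconj.iterate_right (fun x => (hs x).symm) n
  have hEqOn : σ^[n] ∘ i = id ∘ i := funext fun x => by
    rw [Function.comp_apply, ← hsemi x, ← RingAut.coe_pow, hn, RingAut.one_apply]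
    rfl
  ext y
  rw [RingAut.coe_pow, hi.equalizer (hσ.iterate n) continuous_id hEqOn]
  rfl

end DenseRange

section FixedField

theorem mem_fixedPoints_subfield_zpowers {G L : Type*} [Group G] [Field L] [MulSemiringAction G L]
    (g : G) (x : L) : x ∈ FixedPoints.subfield (Subgroup.zpowers g) L ↔ g • x = x := by
  refine ⟨fun hx => hx ⟨g, Subgroup.mem_zpowers g⟩, fun hx h => ?_⟩
  have hle : Subgroup.zpowers g ≤ MulAction.stabilizer G x := Subgroup.zpowers_le.2 hx
  exact hle h.2

theorem exists_subfield_isGalois {L : Type*} [Field L] {σ : L ≃+* L} (hσ : IsOfFinOrder σ) :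
    ∃ K : Subfield L, (∀ x, x ∈ K ↔ σ x = x) ∧ IsGalois K L ∧ FiniteDimensional K L ∧
      Nat.card (L ≃ₐ[K] L) = orderOf σ ∧
      ∃ τ : L ≃ₐ[K] L, (∀ x, τ x = σ x) ∧ ∀ g, g ∈ Subgroup.zpowers τ := by
  let G : Subgroup (RingAut L) := Subgroup.zpowers σ
  have : Finite G := hσ.finite_zpowers
  let e := FixedPoints.toAlgAutMulEquiv G L
  refine ⟨FixedPoints.subfield G L, mem_fixedPoints_subfield_zpowers (G := RingAut L) σ,
    IsGalois.of_fixed_field L G, inferInstance, ?_, e ⟨σ, Subgroup.mem_zpowers _⟩,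
    fun x => rfl, fun g => ?_⟩
  · rw [Nat.card_congr e.symm.toEquiv, Nat.card_zpowers]
  · obtain ⟨⟨_, n, rfl⟩, rfl⟩ := e.surjective g
    exact ⟨n, (map_zpow e _ n).symm⟩

end FixedField

section Henselian

open NormedField Topology

variable {K : Type*} [NormedField K] [IsUltrametricDist K]

theorem coe_span_singleton_pow_eq_preimage_closedBall
    (ϖ : (valuation (K := K)).valuationSubring) (n : ℕ) :
    ((Ideal.span {ϖ} ^ n : Ideal _) : Set (valuation (K := K)).valuationSubring) =
      Subtype.val ⁻¹' Metric.closedBall (0 : K) (‖(ϖ : K)‖ ^ n) := by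
  rw [Ideal.span_singleton_pow,
    (Valuation.valuationSubring.integers _).coe_span_singleton_eq_setOfPred_le_v_algebraMap]
  ext x
  rw [Set.mem_preimage, mem_closedBall_zero_iff, ← norm_pow]
  rfl

theorem isAdic_span_singleton {ϖ : (valuation (K := K)).valuationSubring} (hϖ : ϖ ≠ 0)
    (hϖ1 : ‖(ϖ : K)‖ < 1) : IsAdic (Ideal.span {ϖ}) := by
  have hpos : 0 < ‖(ϖ : K)‖ := norm_pos_iff.2 (by exact_mod_cast hϖ)
  refine isAdic_iff.2 ⟨fun n => ?_, fun s hs => ?_⟩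
  · rw [coe_span_singleton_pow_eq_preimage_closedBall]
    exact (IsUltrametricDist.isOpen_closedBall _ (pow_pos hpos n).ne').preimage
      continuous_subtype_val
  · obtain ⟨u, hu, hus⟩ := mem_nhds_subtype _ _ _ |>.1 hs
    obtain ⟨ε, hε, hball⟩ := Metric.mem_nhds_iff.1 hu
    obtain ⟨n, hn⟩ := exists_pow_lt_of_lt_one hε hϖ1
    refine ⟨n, ?_⟩
    rw [coe_span_singleton_pow_eq_preimage_closedBall]
    exact (Set.preimage_mono ((Metric.closedBall_subset_ball hn).trans hball)).trans hus

theorem isAdicComplete_span_singleton [CompleteSpace K]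
    {ϖ : (valuation (K := K)).valuationSubring} (hϖ : ϖ ≠ 0) (hϖ1 : ‖(ϖ : K)‖ < 1) :
    IsAdicComplete (Ideal.span {ϖ}) (valuation (K := K)).valuationSubring := by
  have hball : ((valuation (K := K)).valuationSubring : Set K) = Metric.closedBall 0 1 := by
    ext x
    exact (mem_closedBall_zero_iff (a := x)).symm
  have hclosed : IsClosed ((valuation (K := K)).valuationSubring : Set K) :=
    hball ▸ Metric.isClosed_closedBall
  exact (isAdic_span_singleton hϖ hϖ1).isAdicComplete_iff.2
    ⟨hclosed.completeSpace_coe, inferInstance⟩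

-- The powers of the maximal ideal need not be a basis of neighbourhoods of zero, so completeness
-- is used along the principal ideal generated by the value to be corrected.
theorem henselianLocalRing_valuationSubring [CompleteSpace K] :
    HenselianLocalRing (valuation (K := K)).valuationSubring where
  is_henselian f hf a₀ h₀ h₁ := by
    by_cases hroot : f.eval a₀ = 0
    · exact ⟨a₀, hroot, by simp⟩
    have hlt : ‖(↑(f.eval a₀) : K)‖ < 1 :=
      Valuation.Integer.not_isUnit_iff_valuation_lt_one.1 h₀
    have := isAdicComplete_span_singleton hroot hlt
    obtain ⟨a, ha, haa₀⟩ := HenselianRing.is_henselian (I := Ideal.span {f.eval a₀}) f hf a₀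
      (Ideal.mem_span_singleton_self _) (h₁.map _)
    exact ⟨a, ha, (Ideal.span_singleton_le_iff_mem _).2 h₀ haa₀⟩

end Henselian

/-- `δ` is the supremum of the relative displacements `‖σ x - x‖ / ‖x‖`, `x ≠ 0`, and it is not
attained. -/
structure HasUnattainedDisplacement {L : Type*} [NormedField L] (σ : L → L) (δ : ℝ≥0) : Prop where
  lt : ∀ x ≠ 0, ‖σ x - x‖₊ < δ * ‖x‖₊
  exists_ge : ∀ ε < δ, ∃ x ≠ 0, ε * ‖x‖₊ ≤ ‖σ x - x‖₊

section Extension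

theorem HasUnattainedDisplacement.pos {L : Type*} [NormedField L] {σ : L → L} {δ : ℝ≥0}
    (h : HasUnattainedDisplacement σ δ) : 0 < δ := by
  simpa using pos_of_gt (h.lt 1 one_ne_zero)

theorem HasUnattainedDisplacement.exists_ne {L : Type*} [NormedField L] {σ : L → L} {δ : ℝ≥0}
    (h : HasUnattainedDisplacement σ δ) : ∃ x, σ x ≠ x := by
  obtain ⟨ε, hε, hεδ⟩ := exists_between h.pos
  obtain ⟨x, hx, hle⟩ := h.exists_ge ε hεδ
  refine ⟨x, sub_ne_zero.1 (nnnorm_pos.1 (lt_of_lt_of_le ?_ hle))⟩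
  exact mul_pos hε (nnnorm_pos.2 hx)

theorem HasUnattainedDisplacement.isometry {L : Type*} [NormedField L] [IsUltrametricDist L]
    {σ : L ≃+* L} {δ : ℝ≥0} (h : HasUnattainedDisplacement σ δ) (hδ : δ ≤ 1) : Isometry σ := by
  refine AddMonoidHomClass.isometry_of_norm σ fun x => ?_
  exact congrArg NNReal.toReal
    (map_eq_of_forall_map_sub_lt_mul (w := NormedField.valuation (K := L)) hδ h.lt x)

theorem exists_complete_hasUnattainedDisplacement {F : Type u} [Field F] {p : ℕ} [CharP F p]
    (hp : p.Prime) (v : Valuation F ℝ≥0) {δ : ℝ≥0} (hδ0 : 0 < δ) (hδ : δ ≤ 1)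
    (hv : ∀ ε < δ, ∃ c, ε ≤ v c ∧ v c < δ) :
    ∃ (L : Type u) (_ : NormedField L) (_ : CompleteSpace L) (_ : IsUltrametricDist L)
      (_ : CharP L p) (σ : L ≃+* L), orderOf σ = p ∧ HasUnattainedDisplacement σ δ ∧
      (∀ x : L, ∃ c, ‖x‖₊ = v c) ∧ ∀ c, ∃ x, σ x = x ∧ ‖x‖₊ = v c := by
  have : Fact p.Prime := ⟨hp⟩
  obtain ⟨E, _, _, w, s, hwF, hwE, hsp, hlt, hge⟩ := exists_valued_algEquiv (p := p) v hδ hδ0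
  have hs (x : E) : w (s x) = w x := map_eq_of_forall_map_sub_lt_mul hδ hlt x
  let s' : E ≃+* E := MulSemiringAction.toRingAut (E ≃ₐ[F] E) E s
  obtain ⟨L, _, _, _, i, σ, hi, hiw, hσ, hσi⟩ := exists_complete_extension w s' hs
  have hdisp : HasUnattainedDisplacement σ δ :=
    ⟨fun y hy => nnnorm_map_sub_lt_mul_of_denseRange hi hσ hσi hδ hδ0
        (fun x hx => by rw [hiw, hiw]; exact hlt x hx) hy,
      fun ε hε => by
        obtain ⟨c, hεc, hcδ⟩ := hv ε hε
        obtain ⟨x, hx1, hxc⟩ := hge c hcδ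
        refine ⟨i x, (map_ne_zero i).2 (w.ne_zero_iff.1 (hx1 ▸ one_ne_zero)), ?_⟩
        rw [hσi, ← map_sub, hiw, hiw, hx1, mul_one]
        exact hεc.trans_eq hxc.symm⟩
  have hσp : σ ^ p = 1 := pow_eq_one_of_denseRange hi hσ.continuous hσi <| by
    rw [← map_pow, hsp, map_one]
  have hσ1 : σ ≠ 1 := by
    rintro rfl
    obtain ⟨x, hx⟩ := hdisp.exists_ne
    exact hx rfl
  refine ⟨L, inferInstance, inferInstance, inferInstance,
    charP_of_injective_ringHom (i.comp (algebraMap F E)).injective p, σ,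
    orderOf_eq_prime hσp hσ1, hdisp, fun y => ?_, fun c => ?_⟩
  · rcases eq_or_ne y 0 with rfl | hy
    · exact ⟨0, by simp⟩
    obtain ⟨x, -, hx⟩ := exists_nnnorm_eq_of_denseRange hi hδ0 hδ hy
    obtain ⟨c, hc⟩ := hwE x
    exact ⟨c, by rw [← hx, hiw, hc]⟩
  · refine ⟨i (algebraMap F E c), ?_, by rw [hiw, hwF]⟩
    rw [hσi]
    exact congrArg i (s.commutes c)

end Extension

section Base

open Classical in
/-- The valuation `x ↦ exp (- order x)` of a Hahn series field with exponents in a group of real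
numbers. -/
noncomputable def expNegOrder (Γ : AddSubgroup ℝ) (k : Type*) [Field k] :
    Valuation (HahnSeries Γ k) ℝ≥0 where
  toFun x := if x = 0 then 0 else Real.toNNReal (Real.exp (-x.order))
  map_zero' := if_pos rfl
  map_one' := by simp
  map_mul' x y := by
    rcases eq_or_ne x 0 with rfl | hx
    · simp
    rcases eq_or_ne y 0 with rfl | hy
    · simp
    rw [if_neg (mul_ne_zero hx hy), if_neg hx, if_neg hy, HahnSeries.order_mul hx hy,
      ← Real.toNNReal_mul (Real.exp_nonneg _), ← Real.exp_add, AddSubgroup.coe_add, neg_add]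
  map_add_le_max' x y := by
    rcases eq_or_ne x 0 with rfl | hx
    · simp
    rcases eq_or_ne y 0 with rfl | hy
    · simp
    rcases eq_or_ne (x + y) 0 with hxy | hxy
    · simp [hxy]
    rw [if_neg hx, if_neg hy, if_neg hxy]
    have hle : min (x.order : ℝ) y.order ≤ (x + y).order := by
      exact_mod_cast HahnSeries.min_order_le_order_add hxy
    refine (Real.toNNReal_mono (Real.exp_monotone (neg_le_neg hle))).trans_eq ?_
    rw [← max_neg_neg, Monotone.map_max Real.exp_monotone, Monotone.map_max @Real.toNNReal_mono]

theorem expNegOrder_single (Γ : AddSubgroup ℝ) {k : Type*} [Field k] (γ : Γ) {c : k} (hc : c ≠ 0) :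
    expNegOrder Γ k (HahnSeries.single γ c) = Real.toNNReal (Real.exp (-γ)) := by
  refine (if_neg ?_).trans ?_
  · simpa using hc
  · rw [HahnSeries.order_single hc]

theorem exists_expNegOrder_eq (Γ : AddSubgroup ℝ) {k : Type*} [Field k] {x : HahnSeries Γ k}
    (hx : x ≠ 0) : ∃ γ : Γ, expNegOrder Γ k x = Real.toNNReal (Real.exp (-γ)) :=
  ⟨x.order, if_neg hx⟩

theorem dense_of_not_addEquiv_int {G : Type*} [AddCommGroup G] [LinearOrder G]
    [IsOrderedAddMonoid G] [TopologicalSpace G] [OrderTopology G] [Archimedean G]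
    {Γ : AddSubgroup G} (hΓ : Γ ≠ ⊥) (hΓZ : ¬ Nonempty (Γ ≃+ ℤ)) : Dense (Γ : Set G) := by
  refine Γ.dense_or_cyclic.resolve_right ?_
  rintro ⟨b, hb⟩
  rw [← AddSubgroup.zmultiples_eq_closure] at hb
  have : IsAddCyclic Γ := hb ▸ inferInstance
  have : Nontrivial Γ := Γ.nontrivial_iff_ne_bot.2 hΓ
  exact hΓZ ⟨intCyclicAddEquiv.symm⟩

theorem exists_expNegOrder_mem_Ico {Γ : AddSubgroup ℝ} (hΓ : Dense (Γ : Set ℝ)) (k : Type*)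
    [Field k] {ε δ : ℝ≥0} (h : ε < δ) :
    ∃ c, ε ≤ expNegOrder Γ k c ∧ expNegOrder Γ k c < δ := by
  rcases eq_zero_or_pos ε with rfl | hε
  · exact ⟨0, zero_le, by rwa [map_zero]⟩
  obtain ⟨γ, hγ, hδγ, hγε⟩ := hΓ.exists_between (neg_lt_neg (Real.log_lt_log hε h))
  refine ⟨HahnSeries.single ⟨γ, hγ⟩ 1, ?_⟩
  rw [expNegOrder_single Γ _ one_ne_zero]
  constructor
  · rw [Real.le_toNNReal_iff_coe_le (Real.exp_nonneg _)]
    exact (Real.log_le_iff_le_exp hε).1 (lt_neg.1 hγε).le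
  · rw [Real.toNNReal_lt_iff_lt_coe (Real.exp_nonneg _)]
    exact (Real.lt_log_iff_exp_lt (hε.trans h)).1 (neg_lt.1 hδγ)

end Base

section DisplacementIdeal

theorem map_lt_of_mem_span {R Γ₀ : Type*} [CommRing R] [LinearOrderedCommGroupWithZero Γ₀]
    {v : Valuation R Γ₀} (hv : ∀ r, v r ≤ 1) {s : Set R} {γ : Γ₀} (hγ : γ ≠ 0)
    (hs : ∀ x ∈ s, v x < γ) {x : R} (hx : x ∈ Ideal.span s) : v x < γ := by
  induction hx using Submodule.span_induction with
  | mem x hx => exact hs x hx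
  | zero => rwa [map_zero, zero_lt_iff]
  | add x y _ _ hx hy => exact v.map_add_lt hx hy
  | smul r x _ hx =>
    rw [smul_eq_mul, v.map_mul]
    exact mul_lt_of_le_one_of_lt (hv r) hx

variable {A L : Type*} [CommRing A] [NormedField L] [Algebra A L] {σ : L → L} {δ : ℝ≥0}

/-- The ideal `J_σ` of a subring `B` of `L`, generated by the elements `σ(x)·x⁻¹ − 1` for
`x ∈ Lˣ`. -/
def displacementIdeal (B : Subalgebra A L) (σ : L → L) : Ideal B :=
  Ideal.span {b | ∃ x : Lˣ, (b : L) = σ x * (x : L)⁻¹ - 1}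

theorem nnnorm_map_mul_inv_sub_one {x : L} (hx : x ≠ 0) :
    ‖σ x * x⁻¹ - 1‖₊ = ‖σ x - x‖₊ / ‖x‖₊ := by
  rw [← nnnorm_div, sub_div, div_self hx, div_eq_mul_inv]

theorem HasUnattainedDisplacement.nnnorm_lt_of_mem [IsUltrametricDist L]
    (h : HasUnattainedDisplacement σ δ) {B : Subalgebra A L} (hB : ∀ b ∈ B, ‖b‖ ≤ 1) {b : B}
    (hb : b ∈ displacementIdeal B σ) : ‖(b : L)‖₊ < δ := by
  refine map_lt_of_mem_span (v := (NormedField.valuation (K := L)).comap (algebraMap B L))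
    (fun r => hB r r.2) h.pos.ne' ?_ hb
  rintro c ⟨x, hx⟩
  have hc : ‖(c : L)‖₊ < δ := by
    rw [hx, nnnorm_map_mul_inv_sub_one x.ne_zero, div_lt_iff₀ (nnnorm_pos.2 x.ne_zero)]
    exact h.lt x x.ne_zero
  exact hc

theorem HasUnattainedDisplacement.exists_mem_displacementIdeal
    (h : HasUnattainedDisplacement σ δ) (hδ : δ ≤ 1) {B : Subalgebra A L}
    (hB : ∀ b : L, ‖b‖ ≤ 1 → b ∈ B) {ε : ℝ≥0} (hε : ε < δ) :
    ∃ b ∈ displacementIdeal B σ, ε ≤ ‖(b : L)‖₊ := by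
  obtain ⟨x, hx, hle⟩ := h.exists_ge ε hε
  have hval := nnnorm_map_mul_inv_sub_one (σ := σ) hx
  have hlt : ‖σ x * x⁻¹ - 1‖₊ < δ := by
    rw [hval, div_lt_iff₀ (nnnorm_pos.2 hx)]
    exact h.lt x hx
  refine ⟨⟨σ x * x⁻¹ - 1, hB _ (hlt.le.trans hδ)⟩,
    Ideal.subset_span ⟨Units.mk0 x hx, rfl⟩, ?_⟩
  rw [hval, le_div_iff₀ (nnnorm_pos.2 hx)]
  exact hle

end DisplacementIdeal

section InvariantNorm

open NormedField Polynomial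

variable {K L : Type*} [NormedField K] [NormedField L] [NormedAlgebra K L]
  [FiniteDimensional K L] [IsGalois K L]

theorem norm_algebraNorm_eq_pow (hinv : ∀ (τ : L ≃ₐ[K] L) (x : L), ‖τ x‖ = ‖x‖) (b : L) :
    ‖Algebra.norm K b‖ = ‖b‖ ^ Nat.card (L ≃ₐ[K] L) := by
  rw [← norm_algebraMap' L, Algebra.norm_eq_prod_automorphisms, norm_prod,
    Finset.prod_congr rfl fun τ _ => hinv τ b, Finset.prod_const, Finset.card_univ,
    Nat.card_eq_fintype_card]

variable [IsUltrametricDist L]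

theorem norm_eq_spectralNorm_of_invariant (hinv : ∀ (τ : L ≃ₐ[K] L) (x : L), ‖τ x‖ = ‖x‖)
    (b : L) : ‖b‖ = spectralNorm K L b := by
  rw [← NormedAlgebra.toMulAlgebraNorm_apply K L b]
  exact spectralNorm_unique_of_finiteDimensional_normal K L
    (f := (NormedAlgebra.toMulAlgebraNorm K L).toAlgebraNorm)
    (MulRingNorm.isPowMul (NormedAlgebra.toMulAlgebraNorm K L).toMulRingNorm)
    IsUltrametricDist.norm_add_le_max (norm_algebraMap' L) (fun τ x => (hinv τ x).symm) b

variable [IsUltrametricDist K] [Algebra (valuation (K := K)).valuationSubring L]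
  [IsScalarTower (valuation (K := K)).valuationSubring K L]

theorem isIntegral_iff_norm_le_one (hinv : ∀ (τ : L ≃ₐ[K] L) (x : L), ‖τ x‖ = ‖x‖) (b : L) :
    IsIntegral (valuation (K := K)).valuationSubring b ↔ ‖b‖ ≤ 1 := by
  have hb : IsIntegral K b := Algebra.IsIntegral.isIntegral b
  rw [norm_eq_spectralNorm_of_invariant hinv, spectralNorm,
    spectralValue_le_one_iff (minpoly.monic hb)]
  refine ⟨fun h n => ?_, fun h => ?_⟩
  · rw [minpoly.isIntegrallyClosed_eq_field_fractions' K h, coeff_map]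
    exact ((minpoly (valuation (K := K)).valuationSubring b).coeff n).2
  · have hlifts : minpoly K b ∈ lifts (algebraMap (valuation (K := K)).valuationSubring K) :=
      (lifts_iff_coeff_lifts _).2 fun n => ⟨⟨_, h n⟩, rfl⟩
    obtain ⟨q, hq, -, hqm⟩ := lifts_and_natDegree_eq_and_monic hlifts (minpoly.monic hb)
    refine ⟨q, hqm, ?_⟩
    rw [← aeval_def, ← aeval_map_algebraMap K, hq, minpoly.aeval]

end InvariantNorm

section AssociatedIdeal

open NormedField

variable {K L : Type} [NormedField K] [NormedField L] [NormedAlgebra K L] [FiniteDimensional K L]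
  [IsGalois K L] [IsUltrametricDist K] [IsUltrametricDist L] {σ : L ≃ₐ[K] L} {δ : ℝ≥0}

theorem isometry_of_mem_zpowers {K L : Type*} [CommSemiring K] [NormedField L] [Algebra K L]
    {σ τ : L ≃ₐ[K] L} (hσ : Isometry σ) (hτ : τ ∈ Subgroup.zpowers σ) : Isometry τ := by
  rw [Subgroup.zpowers_eq_closure] at hτ
  induction hτ using Subgroup.closure_induction with
  | mem τ hτ => rwa [Set.mem_singleton_iff.1 hτ]
  | one => exact isometry_id
  | mul τ τ' _ _ h h' => exact h.comp h'
  | inv τ _ h => exact h.right_inv τ.apply_symm_apply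

theorem mem_iff_of_isAssociatedIdeal (hσ : ∀ τ, τ ∈ Subgroup.zpowers σ)
    (h : HasUnattainedDisplacement σ δ) (hδ : δ ≤ 1)
    {H : Ideal (valuation (K := K)).valuationSubring}
    (hH : IsAssociatedIdeal (valuation (K := K)).valuationSubring L H)
    (x : (valuation (K := K)).valuationSubring) :
    x ∈ H ↔ ‖(x : K)‖₊ < δ ^ Nat.card (L ≃ₐ[K] L) := by
  set n := Nat.card (L ≃ₐ[K] L)
  have hn : n ≠ 0 := Nat.card_pos.ne'
  let A := (valuation (K := K)).valuationSubring
  let : Algebra A L := ((algebraMap K L).comp A.subtype).toAlgebra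
  have : IsScalarTower A K L := IsScalarTower.of_algebraMap_eq fun _ => rfl
  have hinv : ∀ (τ : L ≃ₐ[K] L) (x : L), ‖τ x‖ = ‖x‖  := fun τ =>
    (isometry_of_mem_zpowers (h.isometry (σ := σ.toRingEquiv) hδ) (hσ τ)).norm_map_of_map_zero
      (map_zero τ)
  have hB : ∀ b, b ∈ integralClosure A L ↔ ‖b‖ ≤ 1 := isIntegral_iff_norm_le_one hinv
  have hnorm (b : L) : ‖Algebra.norm K b‖₊ = ‖b‖₊ ^ n :=
    NNReal.eq (norm_algebraNorm_eq_pow hinv b)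
  rw [hH σ hσ]
  constructor
  · refine map_lt_of_mem_span (v := valuation.comap (algebraMap A K)) Subtype.prop
      (pow_pos h.pos n).ne' ?_
    rintro a ⟨b, hb, hab⟩
    refine (congrArg (‖·‖₊) hab).trans_lt ?_
    rw [hnorm]
    exact pow_lt_pow_left₀ (h.nnnorm_lt_of_mem (fun b => (hB b).1) hb) zero_le hn
  · intro hx
    obtain ⟨b, hb, hle⟩ := h.exists_mem_displacementIdeal hδ (fun b => (hB b).2)
      (ε := ‖(x : K)‖₊ ^ (n⁻¹ : ℝ)) (by
        rwa [NNReal.rpow_inv_lt_iff (Nat.cast_pos.2 hn.bot_lt), NNReal.rpow_natCast])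
    have hle' : ‖(x : K)‖₊ ≤ ‖Algebra.norm K (b : L)‖₊ := by
      rwa [hnorm, ← NNReal.rpow_natCast, ← NNReal.rpow_inv_le_iff (Nat.cast_pos.2 hn.bot_lt)]
    have hN : ‖Algebra.norm K (b : L)‖ ≤ 1 := by
      rw [norm_algebraNorm_eq_pow hinv]
      exact pow_le_one₀ (norm_nonneg _) ((hB b).1 b.2)
    exact Ideal.mem_of_dvd _ ((Valuation.valuationSubring.integers _).dvd_of_le hle')
      (Ideal.subset_span (s := {a : A | _}) ⟨b, hb, (rfl : algebraMap A K ⟨_, hN⟩ = _)⟩)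

end AssociatedIdeal

section FixedFieldNorm

theorem exists_complete_isGalois {L : Type u} [NormedField L] [CompleteSpace L]
    [IsUltrametricDist L] {σ : L ≃+* L} (hσ : IsOfFinOrder σ) (hcont : Continuous σ) :
    ∃ (K : Type u) (_ : NormedField K) (_ : CompleteSpace K) (_ : IsUltrametricDist K)
      (_ : NormedAlgebra K L), IsGalois K L ∧ FiniteDimensional K L ∧
      Nat.card (L ≃ₐ[K] L) = orderOf σ ∧ (∀ x, x ∈ Set.range (algebraMap K L) ↔ σ x = x) ∧
      ∃ τ : L ≃ₐ[K] L, (∀ x, τ x = σ x) ∧ ∀ g, g ∈ Subgroup.zpowers τ := by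
  obtain ⟨K, hK, hgal, hfin, hcard, hgen⟩ := exists_subfield_isGalois hσ
  have hfix : (K : Set L) = {x | σ x = x} := Set.ext hK
  have hclosed : IsClosed (K : Set L) := hfix ▸ isClosed_eq hcont continuous_id
  let : NormedField K := SubfieldClass.toNormedField K
  let : NormedAlgebra K L := { norm_smul_le := fun c x => norm_mul_le (c : L) x }
  refine ⟨K, inferInstance, hclosed.completeSpace_coe, inferInstance, inferInstance, hgal, hfin,
    hcard, fun x => ?_, hgen⟩
  rw [← hK]
  exact Set.ext_iff.1 Subtype.range_val x

theorem exists_isGalois_hasUnattainedDisplacement {F : Type u} [Field F] {p : ℕ} [CharP F p]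
    (hp : p.Prime) (v : Valuation F ℝ≥0) {δ : ℝ≥0} (hδ0 : 0 < δ) (hδ : δ ≤ 1)
    (hv : ∀ ε < δ, ∃ c, ε ≤ v c ∧ v c < δ) :
    ∃ (K L : Type u) (_ : NormedField K) (_ : CompleteSpace K) (_ : IsUltrametricDist K)
      (_ : NormedField L) (_ : IsUltrametricDist L) (_ : NormedAlgebra K L),
      CharP K p ∧ Set.range (‖·‖₊ : K → ℝ≥0) = Set.range v ∧
      IsGalois K L ∧ FiniteDimensional K L ∧ Nat.card (L ≃ₐ[K] L) = p ∧
      ∃ σ : L ≃ₐ[K] L, HasUnattainedDisplacement σ δ ∧ ∀ τ, τ ∈ Subgroup.zpowers σ := by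
  obtain ⟨L, _, _, _, _, σ, hord, hσ, hL, hF⟩ :=
    exists_complete_hasUnattainedDisplacement hp v hδ0 hδ hv
  obtain ⟨K, _, _, _, _, hgal, hfin, hcard, hK, τ, hτ, hgen⟩ :=
    exists_complete_isGalois (orderOf_pos_iff.1 (hord ▸ hp.pos)) (hσ.isometry hδ).continuous
  refine ⟨K, L, inferInstance, inferInstance, inferInstance, inferInstance, inferInstance,
    inferInstance, (algebraMap K L).charP (algebraMap K L).injective p, ?_, hgal, hfin,
    hcard.trans hord, τ, (funext hτ : ⇑τ = σ) ▸ hσ, hgen⟩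
  refine subset_antisymm (Set.range_subset_iff.2 fun x => ?_) (Set.range_subset_iff.2 fun c => ?_)
  · obtain ⟨c, hc⟩ := hL (algebraMap K L x)
    exact ⟨c, by rw [← hc, nnnorm_algebraMap']⟩
  · obtain ⟨x, hx, hxc⟩ := hF c
    obtain ⟨y, rfl⟩ := (hK x).2 hx
    exact ⟨y, by rw [← hxc, nnnorm_algebraMap']⟩

end FixedFieldNorm

section NegLogNorm

variable {K : Type*} [NormedField K]

/-- The additive valuation `x ↦ - log ‖x‖` attached to a norm. -/
noncomputable def negLogNorm (x : Kˣ) : ℝ :=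
  -Real.log ‖(x : K)‖

theorem negLogNorm_mul (x y : Kˣ) : negLogNorm (x * y) = negLogNorm x + negLogNorm y := by
  rw [negLogNorm, Units.val_mul, norm_mul, Real.log_mul (norm_ne_zero_iff.2 x.ne_zero)
    (norm_ne_zero_iff.2 y.ne_zero), neg_add, negLogNorm, negLogNorm]

theorem min_negLogNorm_le [IsUltrametricDist K] {x y z : Kˣ} (h : (x : K) + y = z) :
    min (negLogNorm x) (negLogNorm y) ≤ negLogNorm z := by
  have hpos (x : Kˣ) : 0 < ‖(x : K)‖ := norm_pos_iff.2 x.ne_zero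
  have hle : ‖(z : K)‖ ≤ max ‖(x : K)‖ ‖(y : K)‖ := h ▸ IsUltrametricDist.norm_add_le_max _ _
  rw [negLogNorm, negLogNorm, negLogNorm, min_neg_neg, neg_le_neg_iff, le_max_iff]
  exact (le_max_iff.1 hle).imp (Real.log_le_log (hpos z)) (Real.log_le_log (hpos z))

theorem negLogNorm_nonneg_iff (x : Kˣ) : 0 ≤ negLogNorm x ↔ ‖(x : K)‖ ≤ 1 := by
  rw [negLogNorm, neg_nonneg, Real.log_nonpos_iff (norm_nonneg _)]

theorem lt_negLogNorm_iff (x : Kˣ) (r : ℝ) :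
    r < negLogNorm x ↔ ‖(x : K)‖₊ < Real.toNNReal (Real.exp (-r)) := by
  rw [negLogNorm, lt_neg, Real.log_lt_iff_lt_exp (norm_pos_iff.2 x.ne_zero),
    Real.lt_toNNReal_iff_coe_lt, coe_nnnorm]

theorem negLogNorm_eq_iff (x : Kˣ) (r : ℝ) :
    negLogNorm x = r ↔ ‖(x : K)‖₊ = Real.toNNReal (Real.exp (-r)) := by
  rw [negLogNorm, neg_eq_iff_eq_neg, ← Real.exp_eq_exp,
    Real.exp_log (norm_pos_iff.2 x.ne_zero), ← NNReal.coe_inj, coe_nnnorm,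
    Real.coe_toNNReal _ (Real.exp_nonneg _)]

theorem range_negLogNorm {Γ : AddSubgroup ℝ} {k : Type*} [Field k]
    (h : Set.range (‖·‖₊ : K → ℝ≥0) = Set.range (expNegOrder Γ k)) :
    Set.range (negLogNorm : Kˣ → ℝ) = Γ := by
  refine subset_antisymm (Set.range_subset_iff.2 fun x => ?_) fun γ hγ => ?_
  · obtain ⟨c, hc⟩ : ‖(x : K)‖₊ ∈ Set.range (expNegOrder Γ k) := h ▸ Set.mem_range_self _
    have hc0 : c ≠ 0 := by
      rintro rfl
      exact x.ne_zero (nnnorm_eq_zero.1 (hc.symm.trans (map_zero _)))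
    obtain ⟨γ, hγ⟩ := exists_expNegOrder_eq Γ hc0
    rw [(negLogNorm_eq_iff x γ).2 (hc.symm.trans hγ)]
    exact γ.2
  · obtain ⟨x, hx⟩ : Real.toNNReal (Real.exp (-γ)) ∈ Set.range (‖·‖₊ : K → ℝ≥0) :=
      h ▸ ⟨_, expNegOrder_single Γ ⟨γ, hγ⟩ (one_ne_zero (α := k))⟩
    have hx0 : x ≠ 0 := nnnorm_pos.1 ((Real.toNNReal_pos.2 (Real.exp_pos _)).trans_eq hx.symm)
    exact ⟨Units.mk0 x hx0, (negLogNorm_eq_iff _ γ).2 hx⟩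

theorem setOf_negLogNorm_eq [IsUltrametricDist K] {Γ : AddSubgroup ℝ} {a : ℝ} (ha : 0 ≤ a)
    (hΓ : Set.range (negLogNorm : Kˣ → ℝ) = Γ)
    {H : Ideal (NormedField.valuation (K := K)).valuationSubring}
    (hH : ∀ x, x ∈ H ↔ ‖(x : K)‖₊ < Real.toNNReal (Real.exp (-a))) :
    {r : ℝ | ∃ h ∈ H, ∃ x : Kˣ, (x : K) = h ∧ negLogNorm x = r} = {r : ℝ | r ∈ Γ ∧ a < r} := by
  ext r
  constructor
  · rintro ⟨h, hh, x, hxh, rfl⟩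
    refine ⟨hΓ.subset ⟨x, rfl⟩, ?_⟩
    rwa [lt_negLogNorm_iff, hxh, ← hH]
  · rintro ⟨hr, har⟩
    obtain ⟨x, rfl⟩ := hΓ.superset hr
    have hx : ‖(x : K)‖ ≤ 1 := (negLogNorm_nonneg_iff x).1 (ha.trans har.le)
    exact ⟨⟨x, hx⟩, (hH _).2 ((lt_negLogNorm_iff x a).1 har), x, rfl, rfl⟩

end NegLogNorm

/-- Let `p` be a prime, `Γ` a nonzero subgroup of `ℝ` not isomorphic to `ℤ`, and `a` a
positive real number.  Then there are a field `K` of characteristic `p`, a Henselian valuation ring `A`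
with fraction field `K`, a valuation `v : Kˣ → ℝ` with image `Γ` and
`A = {0} ∪ {x : v(x) ≥ 0}`, and a cyclic Galois extension `L/K` of degree `p` such that
`{v(x) : x ∈ H, x ≠ 0} = {γ ∈ Γ : γ > a}`, where `H` is the ideal of `A` associated
to `L/K`. -/
theorem exists_assoc_ideal_value_set_eq_Ioi
    (p : ℕ) (hp : p.Prime) (Γ : AddSubgroup ℝ) (hΓ : Γ ≠ ⊥)
    (hΓZ : ¬Nonempty (↥Γ ≃+ ℤ)) (a : ℝ) (hapos : 0 < a) :
    ∃ (K : Type) (_ : Field K) (_ : CharP K p) (A : ValuationSubring K)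
      (_ : HenselianLocalRing ↥A) (v : Kˣ → ℝ),
      (∀ x y : Kˣ, v (x * y) = v x + v y) ∧
      (∀ x y z : Kˣ, (x : K) + (y : K) = (z : K) → min (v x) (v y) ≤ v z) ∧
      Set.range v = (Γ : Set ℝ) ∧
      (∀ x : Kˣ, ((x : K) ∈ A ↔ 0 ≤ v x)) ∧
      ∃ (L : Type) (_ : Field L) (_ : Algebra K L),
        IsGalois K L ∧ FiniteDimensional K L ∧ IsCyclic (L ≃ₐ[K] L) ∧
        Nat.card (L ≃ₐ[K] L) = p ∧
        ∀ H : Ideal ↥A, IsAssociatedIdeal A L H →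
          {r : ℝ | ∃ h ∈ H, ∃ x : Kˣ, (x : K) = ((h : ↥A) : K) ∧ v x = r} =
            {r : ℝ | r ∈ Γ ∧ a < r} := by
  have : Fact p.Prime := ⟨hp⟩
  have : CharP (HahnSeries Γ (ZMod p)) p :=
    charP_of_injective_algebraMap (algebraMap (ZMod p) _).injective p
  let δ : ℝ≥0 := Real.toNNReal (Real.exp (-a)) ^ (p⁻¹ : ℝ)
  have hδ0 : 0 < δ := NNReal.rpow_pos (Real.toNNReal_pos.2 (Real.exp_pos _))
  have hδ1 : δ ≤ 1 := NNReal.rpow_le_one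
    (Real.toNNReal_le_one.2 (Real.exp_le_one_iff.2 (neg_nonpos.2 hapos.le))) (by positivity)
  have hδp : δ ^ p = Real.toNNReal (Real.exp (-a)) := NNReal.rpow_inv_natCast_pow _ hp.ne_zero
  obtain ⟨K, L, _, _, _, _, _, _, hchar, hrange, hgal, hfin, hcard, σ, hσ, hgen⟩ :=
    exists_isGalois_hasUnattainedDisplacement hp (expNegOrder Γ (ZMod p)) hδ0 hδ1
      fun ε => exists_expNegOrder_mem_Ico (dense_of_not_addEquiv_int hΓ hΓZ) (ZMod p)
  have hv : Set.range (negLogNorm : Kˣ → ℝ) = Γ := range_negLogNorm hrange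
  refine ⟨K, inferInstance, hchar, NormedField.valuation.valuationSubring,
    henselianLocalRing_valuationSubring, negLogNorm, negLogNorm_mul, fun _ _ _ => min_negLogNorm_le,
    hv, fun x => (negLogNorm_nonneg_iff x).symm, L, inferInstance, inferInstance, hgal, hfin,
    ⟨σ, hgen⟩, hcard, fun H hH => setOf_negLogNorm_eq hapos.le hv fun x => ?_⟩
  rw [mem_iff_of_isAssociatedIdeal hgen hσ hδ1 hH, hcard, hδp]
end
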